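/- arXiv:1703.05173 — 5 statements merged into one kernel-verified Lean document; each statement's English description precedes it below -/
import Mathlib

section
/- There is a constant C_k > 0 depending only on k with the following property. Let k ≥ 3, let H be a simple k-uniform hypergraph with n vertices and maximum degree Δ, and suppose q ≤ 2Δ and q ≥ max{C_k·log n, 500·k³·Δ^{1/(k−1)}}. Let Γ_𝒬 be the graph whose vertex set is the set 𝒬 of proper q-colorings of H, in which two proper colorings are adjacent if and only if they differ at exactly one vertex (i.e. one can be obtained from the other by a single Glauber move). Then any two ε-good proper q-colorings of H lie in the same connected component of Γ_𝒬; in particular Γ_𝒬 has a connected component containing every ε-good proper coloring. -/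
/-!
Both colorings are swept into a common one. Enumerate the vertices as `r : V ≃ Fin n` and recolor
them in this order, giving the `t`-th vertex the *same* color in the run started at `X` and in the
run started at `Y`. After the sweep the two runs agree, and every intermediate coloring is proper as
long as each chosen color is available in both runs. So it is enough to find, at each vertex `v`, a
common available color, and for this it suffices that fewer than `q / 4` colors are blocked at `v`
in each run when its turn comes.

That many unblocked colors are guaranteed by a derandomized exponential moment argument. If each
color is drawn from a set of at least `q / 2` colors, a given color is drawn with probability at
most `2 / q`. The quantity `edgeWt` is the resulting bound on the probability that, at `v`'s turn,
`e \ {v}` is monochromatic, given the colors chosen so far, and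
`vertexWt = ∏_{e ∋ v} (1 + edgeWt)` bounds the conditional expectation of `2 ^ (blocked colors)`.
Since `H` is simple, the vertex being recolored lies in at most one edge through `v`, so `vertexWt`
is affine in the one factor that changes and does not increase on average
(`sum_vertexWt_update_le`). Hence some choice of color does not increase the sum of all the weights
of the vertices still to come, over both runs.

Initially, an edge `e ∋ v` with `i` colors on `e \ {v}` contributes at most `q (2/q)^i`
(`sum_prod_le`), and goodness, together with the lower bound on `q` for `i = k - 1`, makes the sum
of these at most `q / 50` (`vertexWt_zero_le`). So the total weight starts at no more than
`2 n exp (q / 50) ≤ exp (q / 10)`, whereas `q / 4` blocked colors at some vertex would make it at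
least `2 ^ (q / 4)`, which is larger.
-/

open Finset

noncomputable section
open Classical

variable {V : Type} [Fintype V] [DecidableEq V]

/-- The set of proper `q`-colorings: no edge is monochromatic. -/
def properColorings (E : Finset (Finset V)) (q : ℕ) : Finset (V → Fin q) :=
  Finset.univ.filter (fun X => ∀ e ∈ E, ∃ u ∈ e, ∃ w ∈ e, X u ≠ X w)

/-- `yCount E X v i` is the number of edges `e ∋ v` on which `X` takes exactly `i`
distinct values on `e \ {v}`. -/
def yCount (E : Finset (Finset V)) {q : ℕ} (X : V → Fin q) (v : V) (i : ℕ) : ℕ :=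
  (E.filter (fun e => v ∈ e ∧ ((e.erase v).image X).card = i)).card

/-- `X` is `ε`-bad at `v` if `y_{v,i,X} ≥ (εq)^i` for some `1 ≤ i ≤ k-2`. -/
def epsBadAt (E : Finset (Finset V)) (k : ℕ) {q : ℕ} (ε : ℝ) (X : V → Fin q) (v : V) : Prop :=
  ∃ i : ℕ, 1 ≤ i ∧ i ≤ k - 2 ∧ (ε * (q : ℝ)) ^ i ≤ (yCount E X v i : ℝ)

/-- The set `A(v,X)` of colors available at `v`: those `c` such that no edge `e ∋ v`
has `e \ {v}` entirely colored `c`. -/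
def availSet (E : Finset (Finset V)) {q : ℕ} (X : V → Fin q) (v : V) : Finset (Fin q) :=
  Finset.univ.filter (fun c => ¬ ∃ e ∈ E, v ∈ e ∧ ∀ w ∈ e.erase v, X w = c)

/-- One-step transition probability of the Glauber dynamics: choose `v` uniformly from `V`;
if `A(v,X)` is nonempty recolor `v` with a uniform color from `A(v,X)`, else stay put. -/
def stepProb (E : Finset (Finset V)) {q : ℕ} (X Z : V → Fin q) : ℝ :=
  (Fintype.card V : ℝ)⁻¹ * ∑ v : V,
    if (availSet E X v).Nonempty then
      (if (∀ u : V, u ≠ v → Z u = X u) ∧ Z v ∈ availSet E X v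
        then ((availSet E X v).card : ℝ)⁻¹ else 0)
    else (if Z = X then 1 else 0)

/-- The distribution of the Glauber dynamics after `t` steps, started from
the initial distribution `init`. -/
def glauberDist (E : Finset (Finset V)) {q : ℕ} (init : (V → Fin q) → ℝ) :
    ℕ → (V → Fin q) → ℝ
  | 0 => init
  | t + 1 => fun Z => ∑ X : V → Fin q, glauberDist E init t X * stepProb E X Z

/-- `goodRunDist E k ε X₀ t Z` is the probability that the Glauber dynamics started at `X₀`
satisfies: `X_s` is `ε`-good for all `0 ≤ s ≤ t` and `X_t = Z`. -/
def goodRunDist (E : Finset (Finset V)) (k : ℕ) {q : ℕ} (ε : ℝ) (X₀ : V → Fin q) :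
    ℕ → (V → Fin q) → ℝ
  | 0 => fun X => if X = X₀ ∧ (∀ v : V, ¬ epsBadAt E k ε X v) then 1 else 0
  | t + 1 => fun Z =>
      if (∀ v : V, ¬ epsBadAt E k ε Z v)
        then ∑ X : V → Fin q, goodRunDist E k ε X₀ t X * stepProb E X Z
        else 0

set_option linter.unusedSectionVars false

/-! ### Conditional weights -/

/-- The weight, summed over colors `a`, of the event that all of `e \ {v}` has color `a` when `v`
is about to be recolored. The vertices `w` with `r w < t` already have their final color, those with
`t ≤ r w < r v` are still to be recolored before `v` and count a factor `2 / q` each, and those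
after `v` keep their present color. -/
def edgeWt {q : ℕ} (r : V → ℕ) (t : ℕ) (X : V → Fin q) (v : V) (e : Finset V) : ℝ :=
  ∑ a : Fin q, ∏ w ∈ e.erase v,
    (if t ≤ r w ∧ r w < r v then (2 / q : ℝ) else if X w = a then 1 else 0)

/-- The product of `1 + edgeWt` over the edges at `v`: an upper bound for the conditional
expectation of `2 ^ (number of colors blocked at v)` at the time `v` is recolored. -/
def vertexWt (E : Finset (Finset V)) {q : ℕ} (r : V → ℕ) (t : ℕ) (X : V → Fin q) (v : V) : ℝ :=
  ∏ e ∈ E.filter (fun e => v ∈ e), (1 + edgeWt r t X v e)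

lemma edgeWt_nonneg {q : ℕ} (r : V → ℕ) (t : ℕ) (X : V → Fin q) (v : V) (e : Finset V) :
    0 ≤ edgeWt r t X v e := by
  unfold edgeWt
  refine sum_nonneg fun a _ => prod_nonneg fun w _ => ?_
  split_ifs <;> positivity

lemma vertexWt_nonneg (E : Finset (Finset V)) {q : ℕ} (r : V → ℕ) (t : ℕ) (X : V → Fin q)
    (v : V) : 0 ≤ vertexWt E r t X v :=
  prod_nonneg fun e _ => by linarith [edgeWt_nonneg r t X v e]

/-- Recoloring a vertex outside `e \ {v}` does not affect the weight of `e`. -/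
lemma edgeWt_update_of_notMem {q : ℕ} {r : V → ℕ} (hr : Function.Injective r)
    (X : V → Fin q) {u v : V} {e : Finset V} (hu : u ∉ e.erase v) (c : Fin q) :
    edgeWt r (r u + 1) (Function.update X u c) v e = edgeWt r (r u) X v e := by
  unfold edgeWt
  refine sum_congr rfl fun a _ => prod_congr rfl fun w hw => ?_
  have hwu : w ≠ u := fun h => hu (h ▸ hw)
  have h1 : r u + 1 ≤ r w ↔ r u ≤ r w := by
    have := hr.ne hwu
    omega
  simp only [Function.update_of_ne hwu, h1]

/-- A color drawn uniformly from at least `q / 2` colors hits each one with probability at most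
`2 / q`, so the weight of an edge does not increase on average. -/
lemma sum_edgeWt_update_le {q : ℕ} {r : V → ℕ} (hr : Function.Injective r)
    (X : V → Fin q) {u v : V} {e : Finset V} (hu : u ∈ e) (huv : r u < r v)
    (A : Finset (Fin q)) (hA : (q : ℝ) ≤ 2 * A.card) (hq : 0 < q) :
    ∑ c ∈ A, edgeWt r (r u + 1) (Function.update X u c) v e ≤ A.card * edgeWt r (r u) X v e := by
  have hq' : (0 : ℝ) < q := by exact_mod_cast hq
  have hne : u ≠ v := fun h => by simp [h] at huv
  have hmem : u ∈ e.erase v := mem_erase.2 ⟨hne, hu⟩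
  set G : Fin q → ℝ := fun a => ∏ w ∈ (e.erase v).erase u,
    (if r u ≤ r w ∧ r w < r v then (2 / q : ℝ) else if X w = a then 1 else 0) with hG
  have hG0 : ∀ a, 0 ≤ G a := fun a => prod_nonneg fun w _ => by split_ifs <;> positivity
  have hL : ∀ c, edgeWt r (r u + 1) (Function.update X u c) v e = G c := by
    intro c
    unfold edgeWt
    rw [sum_eq_single c]
    · rw [← mul_prod_erase _ _ hmem]
      simp only [Function.update_self, if_true]
      rw [if_neg (by omega), one_mul]
      refine prod_congr rfl fun w hw => ?_
      have hwu : w ≠ u := (mem_erase.1 hw).1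
      have h1 : r u + 1 ≤ r w ↔ r u ≤ r w := by
        have := hr.ne hwu
        omega
      simp only [Function.update_of_ne hwu, h1]
    · intro a _ hac
      refine prod_eq_zero hmem ?_
      rw [if_neg (by omega), Function.update_self, if_neg (Ne.symm hac)]
    · simp
  have hR : edgeWt r (r u) X v e = (2 / q : ℝ) * ∑ a, G a := by
    unfold edgeWt
    rw [mul_sum]
    refine sum_congr rfl fun a _ => ?_
    rw [← mul_prod_erase _ _ hmem, if_pos ⟨le_rfl, huv⟩]
  simp only [hL]
  rw [hR, ← mul_assoc]
  have h1 : ∑ c ∈ A, G c ≤ ∑ a, G a :=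
    sum_le_sum_of_subset_of_nonneg (subset_univ _) fun a _ _ => hG0 a
  have h2 : (1 : ℝ) ≤ A.card * (2 / q) := by
    rw [mul_div_assoc', le_div_iff₀ hq']
    linarith
  have h3 : 0 ≤ ∑ a, G a := sum_nonneg fun a _ => hG0 a
  nlinarith

/-- The supermartingale step: by simplicity at most one edge at `v` contains `u`, so recoloring `u`
changes a single factor of the weight of `v`. -/
lemma sum_vertexWt_update_le {E : Finset (Finset V)}
    (hE : ∀ e ∈ E, ∀ f ∈ E, e ≠ f → (e ∩ f).card ≤ 1)
    {q : ℕ} {r : V → ℕ} (hr : Function.Injective r)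
    (X : V → Fin q) {u v : V} (huv : r u < r v)
    (A : Finset (Fin q)) (hA : (q : ℝ) ≤ 2 * A.card) (hq : 0 < q) :
    ∑ c ∈ A, vertexWt E r (r u + 1) (Function.update X u c) v
      ≤ A.card * vertexWt E r (r u) X v := by
  have hne : u ≠ v := fun h => by simp [h] at huv
  by_cases h : ∃ e ∈ E, v ∈ e ∧ u ∈ e
  · obtain ⟨e, he, hve, hue⟩ := h
    have hmem : e ∈ E.filter (fun e => v ∈ e) := mem_filter.2 ⟨he, hve⟩
    set R : ℝ := ∏ f ∈ (E.filter (fun e => v ∈ e)).erase e, (1 + edgeWt r (r u) X v f) with hR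
    have hR0 : 0 ≤ R := prod_nonneg fun f _ => by linarith [edgeWt_nonneg r (r u) X v f]
    have h1 : ∀ c, vertexWt E r (r u + 1) (Function.update X u c) v
        = (1 + edgeWt r (r u + 1) (Function.update X u c) v e) * R := by
      intro c
      unfold vertexWt
      rw [← mul_prod_erase _ _ hmem]
      congr 1
      refine prod_congr rfl fun f hf => ?_
      rw [edgeWt_update_of_notMem hr]
      intro huf
      obtain ⟨hfe, hf'⟩ := mem_erase.1 hf
      obtain ⟨hfE, hvf⟩ := mem_filter.1 hf'
      have h2 := hE f hfE e he hfe
      have h3 : 1 < (f ∩ e).card := one_lt_card.2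
        ⟨u, mem_inter.2 ⟨(mem_erase.1 huf).2, hue⟩, v, mem_inter.2 ⟨hvf, hve⟩, hne⟩
      omega
    have h2 : vertexWt E r (r u) X v = (1 + edgeWt r (r u) X v e) * R := by
      unfold vertexWt
      rw [← mul_prod_erase _ _ hmem]
    simp only [h1]
    rw [h2, ← sum_mul, ← mul_assoc]
    refine mul_le_mul_of_nonneg_right ?_ hR0
    rw [sum_add_distrib, mul_add]
    have := sum_edgeWt_update_le hr X hue huv A hA hq
    simpa using this
  · have h1 : ∀ c, vertexWt E r (r u + 1) (Function.update X u c) v = vertexWt E r (r u) X v := by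
      intro c
      unfold vertexWt
      refine prod_congr rfl fun f hf => ?_
      rw [edgeWt_update_of_notMem hr]
      intro huf
      exact h ⟨f, (mem_filter.1 hf).1, (mem_filter.1 hf).2, (mem_erase.1 huf).2⟩
    simp [h1]

/-- At the turn of `v` nothing before `v` is undecided, and each blocked color is the color of a
monochromatic `e \ {v}` with `edgeWt ≥ 1`. -/
lemma two_pow_blocked_le_vertexWt {E : Finset (Finset V)} {q : ℕ} (r : V → ℕ) (X : V → Fin q)
    (v : V) (hE : ∀ e ∈ E, 2 ≤ e.card) :
    (2 : ℝ) ^ (univ \ availSet E X v).card ≤ vertexWt E r (r v) X v := by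
  have key : ∀ a ∈ univ \ availSet E X v, ∃ e, (e ∈ E ∧ v ∈ e) ∧ ∀ w ∈ e.erase v, X w = a := by
    intro a ha
    simpa [availSet, and_assoc] using ha
  choose! g hg1 hg2 using key
  have hinj : Set.InjOn g (univ \ availSet E X v : Finset (Fin q)) := by
    intro a ha b hb hab
    have hcard := hE (g a) (hg1 a ha).1
    have : (g a).erase v |>.Nonempty := by
      rw [← card_pos, card_erase_of_mem (hg1 a ha).2]
      omega
    obtain ⟨w, hw⟩ := this
    rw [← hg2 a ha w hw, hg2 b hb w (hab ▸ hw)]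
  have hsub : (univ \ availSet E X v).image g ⊆ E.filter (fun e => v ∈ e) := by
    intro e he
    obtain ⟨a, ha, rfl⟩ := mem_image.1 he
    exact mem_filter.2 (hg1 a ha)
  have hone : ∀ e ∈ (univ \ availSet E X v).image g, 1 ≤ edgeWt r (r v) X v e := by
    intro e he
    obtain ⟨a, ha, rfl⟩ := mem_image.1 he
    unfold edgeWt
    refine le_trans (le_of_eq ?_) (single_le_sum (fun b _ => prod_nonneg fun w _ => ?_)
      (mem_univ a))
    · symm
      refine prod_eq_one fun w hw => ?_
      rw [if_neg (by omega), if_pos (hg2 a ha w hw)]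
    · split_ifs <;> positivity
  calc (2 : ℝ) ^ (univ \ availSet E X v).card
      = ∏ e ∈ (univ \ availSet E X v).image g, (2 : ℝ) := by
        rw [prod_const, card_image_of_injOn hinj]
    _ ≤ ∏ e ∈ (univ \ availSet E X v).image g, (1 + edgeWt r (r v) X v e) :=
        prod_le_prod (fun _ _ => by norm_num) fun e he => by linarith [hone e he]
    _ ≤ vertexWt E r (r v) X v := by
        unfold vertexWt
        rw [← prod_sdiff hsub]
        exact le_mul_of_one_le_left
          (prod_nonneg fun e _ => by linarith [edgeWt_nonneg r (r v) X v e])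
          (one_le_prod fun e _ => by linarith [edgeWt_nonneg r (r v) X v e])

/-! ### The sweep -/

lemma update_mem_properColorings {E : Finset (Finset V)} {q : ℕ} {X : V → Fin q}
    (hX : X ∈ properColorings E q) {v : V} {c : Fin q} (hc : c ∈ availSet E X v) :
    Function.update X v c ∈ properColorings E q := by
  simp only [properColorings, mem_filter, mem_univ, true_and] at hX ⊢
  intro e he
  by_cases hv : v ∈ e
  · simp only [availSet, mem_filter, mem_univ, true_and] at hc
    push Not at hc
    obtain ⟨w, hw, hwc⟩ := hc e he hv
    refine ⟨w, (mem_erase.1 hw).2, v, hv, ?_⟩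
    rwa [Function.update_of_ne (mem_erase.1 hw).1, Function.update_self]
  · obtain ⟨a, ha, b, hb, hab⟩ := hX e he
    refine ⟨a, ha, b, hb, ?_⟩
    rwa [Function.update_of_ne (ne_of_mem_of_not_mem ha hv),
      Function.update_of_ne (ne_of_mem_of_not_mem hb hv)]

/-- Adjacency in `Γ_𝒬`. -/
def glauberAdj (E : Finset (Finset V)) (q : ℕ) (A B : V → Fin q) : Prop :=
  A ∈ properColorings E q ∧ B ∈ properColorings E q ∧
    (Finset.univ.filter (fun v => A v ≠ B v)).card = 1

lemma glauberAdj_symm {E : Finset (Finset V)} {q : ℕ} {A B : V → Fin q}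
    (h : glauberAdj E q A B) : glauberAdj E q B A := by
  obtain ⟨h1, h2, h3⟩ := h
  exact ⟨h2, h1, by simpa only [ne_comm] using h3⟩

lemma reflTransGen_symm {E : Finset (Finset V)} {q : ℕ} {A B : V → Fin q}
    (h : Relation.ReflTransGen (glauberAdj E q) A B) :
    Relation.ReflTransGen (glauberAdj E q) B A := by
  induction h with
  | refl => exact .refl
  | tail _ hbc ih => exact .head (glauberAdj_symm hbc) ih

lemma reflTransGen_update {E : Finset (Finset V)} {q : ℕ} {X : V → Fin q}
    (hX : X ∈ properColorings E q) {v : V} {c : Fin q} (hc : c ∈ availSet E X v) :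
    Relation.ReflTransGen (glauberAdj E q) X (Function.update X v c) := by
  by_cases h : X v = c
  · rw [← h, Function.update_eq_self]
  · refine Relation.ReflTransGen.single ⟨hX, update_mem_properColorings hX hc, ?_⟩
    rw [card_eq_one]
    refine ⟨v, ?_⟩
    ext w
    by_cases hw : w = v
    · subst hw
      simp [h]
    · simp [hw]

/-- The total weight of the vertices not yet recolored at time `t`, over the two runs. -/
def totalWt (E : Finset (Finset V)) {q : ℕ} (r : V → ℕ) (t : ℕ) (X Y : V → Fin q) : ℝ :=
  ∑ v ∈ univ.filter (fun v => t ≤ r v), (vertexWt E r t X v + vertexWt E r t Y v)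

lemma blocked_card_lt {E : Finset (Finset V)} {q : ℕ} (hq : 0 < q) (r : V → ℕ) (X : V → Fin q)
    (v : V) (hE : ∀ e ∈ E, 2 ≤ e.card) (h : vertexWt E r (r v) X v ≤ Real.exp (q / 10)) :
    4 * (univ \ availSet E X v).card < q := by
  by_contra! hcon
  have h1 := (two_pow_blocked_le_vertexWt r X v hE).trans h
  rw [← Real.log_le_iff_le_exp (by positivity), Real.log_pow] at h1
  have h2 : (q : ℝ) ≤ 4 * ((univ \ availSet E X v).card : ℝ) := by exact_mod_cast hcon
  have h3 := Real.log_two_gt_d9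
  have h4 : (0 : ℝ) < q := by exact_mod_cast hq
  nlinarith

/-- Recoloring the remaining vertices `t, t + 1, …` identically in both runs, always with a color
that does not increase the total weight, makes the two runs meet. -/
lemma reflTransGen_of_totalWt_le {E : Finset (Finset V)}
    (hE : ∀ e ∈ E, ∀ f ∈ E, e ≠ f → (e ∩ f).card ≤ 1) (hE2 : ∀ e ∈ E, 2 ≤ e.card)
    {q : ℕ} (hq : 0 < q) (r : V ≃ Fin (Fintype.card V)) (m : ℕ) :
    ∀ (t : ℕ) (X Y : V → Fin q), t + m = Fintype.card V →
      X ∈ properColorings E q → Y ∈ properColorings E q →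
      (∀ w, (r w : ℕ) < t → X w = Y w) →
      totalWt E (fun v => (r v : ℕ)) t X Y ≤ Real.exp (q / 10) →
      Relation.ReflTransGen (glauberAdj E q) X Y := by
  have hr : Function.Injective (fun v => (r v : ℕ)) := Fin.val_injective.comp r.injective
  induction m with
  | zero =>
    intro t X Y ht _ _ hXY _
    have : X = Y := funext fun w => hXY w (by have := (r w).2; omega)
    rw [this]
  | succ m ih =>
    intro t X Y ht hX hY hXY hwt
    obtain ⟨u, hu⟩ : ∃ u, (r u : ℕ) = t :=
      ⟨r.symm ⟨t, by omega⟩, by simp⟩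
    subst hu
    have hnn : ∀ Z : V → Fin q, ∀ v, 0 ≤ vertexWt E (fun v => (r v : ℕ)) (r u) Z v :=
      fun Z v => vertexWt_nonneg _ _ _ _ _
    have hsingle := single_le_sum
      (f := fun v => vertexWt E (fun v => (r v : ℕ)) (r u) X v
        + vertexWt E (fun v => (r v : ℕ)) (r u) Y v)
      (s := univ.filter (fun v => (r u : ℕ) ≤ r v))
      (fun v _ => add_nonneg (hnn X v) (hnn Y v)) (mem_filter.2 ⟨mem_univ u, le_rfl⟩)
    have hsum := hsingle.trans hwt
    have hbX := blocked_card_lt hq (fun v => (r v : ℕ)) X u hE2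
      ((le_add_of_nonneg_right (hnn Y u)).trans hsum)
    have hbY := blocked_card_lt hq (fun v => (r v : ℕ)) Y u hE2
      ((le_add_of_nonneg_left (hnn X u)).trans hsum)
    set A := availSet E X u ∩ availSet E Y u with hAdef
    have hAc : q ≤ 2 * A.card := by
      have h1 : (univ \ A).card ≤ (univ \ availSet E X u).card + (univ \ availSet E Y u).card := by
        rw [hAdef, sdiff_inter_distrib_right]
        exact card_union_le _ _
      have h2 : (univ \ A).card + A.card = q := by
        have := card_sdiff_add_card_eq_card (subset_univ A)
        simpa using this
      omega
    have hAc' : (q : ℝ) ≤ 2 * A.card := by exact_mod_cast hAc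
    have hAne : A.Nonempty := by
      rw [← card_pos]
      omega
    -- the next total weight, averaged over `c ∈ A`, is at most the present one
    have havg : ∑ c ∈ A, totalWt E (fun v => (r v : ℕ)) (r u + 1)
        (Function.update X u c) (Function.update Y u c)
        ≤ ∑ _c ∈ A, totalWt E (fun v => (r v : ℕ)) (r u) X Y := by
      unfold totalWt
      rw [sum_comm, sum_const, nsmul_eq_mul, mul_sum]
      refine (sum_le_sum fun v hv => ?_).trans
        (sum_le_sum_of_subset_of_nonneg (monotone_filter_right _ fun v _ hv => ?_)
          fun v _ _ => mul_nonneg (Nat.cast_nonneg _) (add_nonneg (hnn X v) (hnn Y v)))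
      · have huv : (r u : ℕ) < r v := (mem_filter.1 hv).2
        rw [sum_add_distrib, mul_add]
        exact add_le_add (sum_vertexWt_update_le hE hr X huv A hAc' hq)
          (sum_vertexWt_update_le hE hr Y huv A hAc' hq)
      · exact (Nat.le_succ _).trans hv
    obtain ⟨c, hcA, hc⟩ := exists_le_of_sum_le hAne havg
    obtain ⟨hcX, hcY⟩ := mem_inter.1 hcA
    have hmid := ih (r u + 1) (Function.update X u c) (Function.update Y u c) (by omega)
      (update_mem_properColorings hX hcX) (update_mem_properColorings hY hcY) (by
        intro w hw
        by_cases hwu : w = u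
        · simp [hwu]
        · rw [Function.update_of_ne hwu, Function.update_of_ne hwu]
          have : (r w : ℕ) ≠ r u := hr.ne hwu
          exact hXY w (by omega)) (hc.trans hwt)
    have hback : Relation.ReflTransGen (glauberAdj E q) (Function.update Y u c) Y :=
      reflTransGen_symm (reflTransGen_update hY hcY)
    exact ((reflTransGen_update hX hcX).trans hmid).trans hback

/-! ### The initial weight -/

/-- If the vertices of `S` outside `B` all have color `a`, the number of colors on `S` is at most
`1 + |S ∩ B|`; and if there are no such vertices, it is at most `|S|`. -/
lemma sum_prod_le {q : ℕ} (hq : 2 ≤ q) (S : Finset V) (B : V → Prop) [DecidablePred B]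
    (X : V → Fin q) :
    ∑ a : Fin q, ∏ w ∈ S, (if B w then (2 / q : ℝ) else if X w = a then 1 else 0)
      ≤ q * (2 / q : ℝ) ^ (S.image X).card := by
  have hq2 : (2 : ℝ) ≤ q := by exact_mod_cast hq
  have hx0 : (0 : ℝ) ≤ 2 / q := by positivity
  have hx1 : (2 / q : ℝ) ≤ 1 := (div_le_one (by linarith)).2 hq2
  by_cases h : ∃ w ∈ S, ¬ B w
  · obtain ⟨w₀, hw₀, hB⟩ := h
    rw [sum_eq_single (X w₀)]
    · by_cases hall : ∀ w ∈ S, ¬ B w → X w = X w₀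
      · have h1 : ∏ w ∈ S, (if B w then (2 / q : ℝ) else if X w = X w₀ then 1 else 0)
            = (2 / q : ℝ) ^ (S.filter B).card := by
          rw [prod_ite, prod_const, prod_eq_one, mul_one]
          intro w hw
          rw [if_pos (hall w (mem_filter.1 hw).1 (mem_filter.1 hw).2)]
        have h2 : S.image X ⊆ insert (X w₀) ((S.filter B).image X) := by
          intro a ha
          obtain ⟨w, hw, rfl⟩ := mem_image.1 ha
          by_cases hBw : B w
          · exact mem_insert_of_mem (mem_image_of_mem _ (mem_filter.2 ⟨hw, hBw⟩))
          · rw [hall w hw hBw]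
            exact mem_insert_self _ _
        have h3 : (S.image X).card ≤ (S.filter B).card + 1 :=
          (card_le_card h2).trans ((card_insert_le _ _).trans
            (Nat.add_le_add_right card_image_le 1))
        rw [h1]
        have h4 := pow_le_pow_of_le_one hx0 hx1 h3
        have h5 : (q : ℝ) * (2 / q : ℝ) ^ ((S.filter B).card + 1)
            = 2 * (2 / q : ℝ) ^ (S.filter B).card := by
          rw [pow_succ]
          field_simp
        have h6 : (0 : ℝ) ≤ (2 / q : ℝ) ^ (S.filter B).card := by positivity
        have h7 := mul_le_mul_of_nonneg_left h4 (by linarith : (0 : ℝ) ≤ q)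
        linarith
      · push Not at hall
        obtain ⟨w, hw, hBw, hne⟩ := hall
        rw [prod_eq_zero hw (by rw [if_neg hBw, if_neg hne])]
        positivity
    · intro a _ ha
      exact prod_eq_zero hw₀ (by rw [if_neg hB, if_neg (Ne.symm ha)])
    · simp
  · push Not at h
    have h1 : ∀ a : Fin q, ∏ w ∈ S, (if B w then (2 / q : ℝ) else if X w = a then 1 else 0)
        = (2 / q : ℝ) ^ S.card := fun a => prod_eq_pow_card fun w hw => if_pos (h w hw)
    simp only [h1, sum_const, card_univ, Fintype.card_fin, nsmul_eq_mul]
    exact mul_le_mul_of_nonneg_left (pow_le_pow_of_le_one hx0 hx1 card_image_le) (by linarith)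

/-- Goodness controls the edges with few colors, and the maximum degree those with `k - 1`. -/
lemma yCount_mul_pow_le {E : Finset (Finset V)} {k q Δ : ℕ} (hk : 3 ≤ k) (hq : 0 < q)
    (hΔ : ∀ v : V, (E.filter (fun e => v ∈ e)).card ≤ Δ)
    (hqΔ : 500 * (k : ℝ) ^ 3 * (Δ : ℝ) ^ ((1 : ℝ) / ((k : ℝ) - 1)) ≤ (q : ℝ))
    (X : V → Fin q) (v : V) (hX : ¬ epsBadAt E k (1 / (50 * (k : ℝ) ^ 2)) X v)
    (i : ℕ) (hi : 1 ≤ i) (hik : i ≤ k - 1) :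
    (yCount E X v i : ℝ) * (2 / q : ℝ) ^ i ≤ 1 / (25 * (k : ℝ) ^ 2) := by
  have hk' : (3 : ℝ) ≤ k := by exact_mod_cast hk
  have hq' : (0 : ℝ) < q := by exact_mod_cast hq
  have hpow : ∀ x : ℝ, 0 ≤ x → x ≤ 1 / (25 * (k : ℝ) ^ 2) → x ^ i ≤ 1 / (25 * (k : ℝ) ^ 2) := by
    intro x hx0 hx
    have h1 : 1 / (25 * (k : ℝ) ^ 2) ≤ 1 := by
      rw [div_le_one (by positivity)]
      nlinarith
    exact (pow_le_of_le_one hx0 (hx.trans h1) (by omega)).trans hx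
  rcases Nat.lt_or_ge (k - 2) i with h | h
  · have hieq : i = k - 1 := by omega
    set d : ℝ := (Δ : ℝ) ^ ((1 : ℝ) / ((k : ℝ) - 1)) with hd
    have hd0 : 0 ≤ d := by positivity
    have hdp : d ^ i = Δ := by
      have hcast : ((i : ℕ) : ℝ) = (k : ℝ) - 1 := by
        rw [hieq, Nat.cast_sub (by omega), Nat.cast_one]
      rw [hd, ← Real.rpow_natCast, ← Real.rpow_mul (Nat.cast_nonneg _), hcast,
        one_div_mul_cancel (by linarith), Real.rpow_one]
    have hy : (yCount E X v i : ℝ) ≤ Δ := by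
      have h1 : yCount E X v i ≤ (E.filter (fun e => v ∈ e)).card :=
        card_le_card fun e he =>
          mem_filter.2 ⟨(mem_filter.1 he).1, (mem_filter.1 he).2.1⟩
      exact_mod_cast h1.trans (hΔ v)
    calc (yCount E X v i : ℝ) * (2 / q : ℝ) ^ i ≤ Δ * (2 / q : ℝ) ^ i := by gcongr
      _ = (d * (2 / q)) ^ i := by rw [mul_pow, hdp]
      _ ≤ _ := by
        refine hpow _ (by positivity) ?_
        rw [mul_div_assoc', div_le_div_iff₀ hq' (by positivity)]
        have : 50 * (k : ℝ) ^ 2 * d ≤ 500 * (k : ℝ) ^ 3 * d := by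
          refine mul_le_mul_of_nonneg_right ?_ hd0
          have : 0 ≤ (k : ℝ) ^ 2 := by positivity
          nlinarith
        linarith
  · have hy : (yCount E X v i : ℝ) < (1 / (50 * (k : ℝ) ^ 2) * q) ^ i := by
      by_contra! hcon
      exact hX ⟨i, hi, h, hcon⟩
    calc (yCount E X v i : ℝ) * (2 / q : ℝ) ^ i
        ≤ (1 / (50 * (k : ℝ) ^ 2) * q) ^ i * (2 / q : ℝ) ^ i := by gcongr
      _ = (1 / (25 * (k : ℝ) ^ 2)) ^ i := by
        rw [← mul_pow]
        congr 1
        field_simp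
        norm_num
      _ ≤ _ := hpow _ (by positivity) le_rfl

lemma vertexWt_zero_le {E : Finset (Finset V)} {k q Δ : ℕ} (hk : 3 ≤ k) (hq : 2 ≤ q)
    (hE : ∀ e ∈ E, e.card = k)
    (hΔ : ∀ v : V, (E.filter (fun e => v ∈ e)).card ≤ Δ)
    (hqΔ : 500 * (k : ℝ) ^ 3 * (Δ : ℝ) ^ ((1 : ℝ) / ((k : ℝ) - 1)) ≤ (q : ℝ))
    (r : V → ℕ) (X : V → Fin q) (v : V)
    (hX : ¬ epsBadAt E k (1 / (50 * (k : ℝ) ^ 2)) X v) :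
    vertexWt E r 0 X v ≤ Real.exp (q / 50) := by
  have hk' : (3 : ℝ) ≤ k := by exact_mod_cast hk
  have h1 : vertexWt E r 0 X v
      ≤ Real.exp (∑ e ∈ E.filter (fun e => v ∈ e), edgeWt r 0 X v e) := by
    rw [Real.exp_sum]
    refine prod_le_prod (fun e _ => by linarith [edgeWt_nonneg r 0 X v e]) fun e _ => ?_
    rw [add_comm]
    exact Real.add_one_le_exp _
  refine h1.trans (Real.exp_le_exp.2 ?_)
  have hmaps : ∀ e ∈ E.filter (fun e => v ∈ e), ((e.erase v).image X).card ∈ Icc 1 (k - 1) := by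
    intro e he
    obtain ⟨heE, hve⟩ := mem_filter.1 he
    have hc : (e.erase v).card = k - 1 := by rw [card_erase_of_mem hve, hE e heE]
    refine mem_Icc.2 ⟨?_, card_image_le.trans hc.le⟩
    have : (e.erase v).Nonempty := by
      rw [← card_pos]
      omega
    exact card_pos.2 (this.image X)
  calc ∑ e ∈ E.filter (fun e => v ∈ e), edgeWt r 0 X v e
      ≤ ∑ e ∈ E.filter (fun e => v ∈ e), q * (2 / q : ℝ) ^ ((e.erase v).image X).card :=
        sum_le_sum fun e _ => sum_prod_le hq (e.erase v) (fun w => 0 ≤ r w ∧ r w < r v) X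
    _ = ∑ i ∈ Icc 1 (k - 1), q * ((yCount E X v i : ℝ) * (2 / q : ℝ) ^ i) := by
        rw [← sum_fiberwise_of_maps_to hmaps]
        refine sum_congr rfl fun i _ => ?_
        rw [sum_congr rfl (g := fun _ => q * (2 / q : ℝ) ^ i)
          (fun e he => by rw [(mem_filter.1 he).2]), sum_const, filter_filter, nsmul_eq_mul]
        unfold yCount
        ring
    _ ≤ ∑ i ∈ Icc 1 (k - 1), q * (1 / (25 * (k : ℝ) ^ 2)) := by
        refine sum_le_sum fun i hi => ?_
        obtain ⟨hi1, hi2⟩ := mem_Icc.1 hi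
        exact mul_le_mul_of_nonneg_left
          (yCount_mul_pow_le hk (by omega) hΔ hqΔ X v hX i hi1 hi2) (Nat.cast_nonneg _)
    _ ≤ k * (q * (1 / (25 * (k : ℝ) ^ 2))) := by
        rw [sum_const, Nat.card_Icc, nsmul_eq_mul]
        refine mul_le_mul_of_nonneg_right ?_ (by positivity)
        exact_mod_cast (by omega : k - 1 + 1 - 1 ≤ k)
    _ = (q : ℝ) / (25 * k) := by field_simp
    _ ≤ q / 50 := by
        gcongr
        linarith

/-- **Corollary 1 (connectivity of good colorings).** For every `k ≥ 3` there is `C_k > 0`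
such that under the hypotheses of the main theorem, any two `ε`-good proper `q`-colorings
(with `ε = 1/(50k²)`) are joined by a path in the graph `Γ_𝒬` on proper colorings in which
two colorings are adjacent iff they differ at exactly one vertex. -/
theorem good_colorings_connected :
    ∀ k : ℕ, 3 ≤ k → ∃ C : ℝ, 0 < C ∧
      ∀ (V : Type) [Fintype V] [DecidableEq V]
        (E : Finset (Finset V)) (q Δ : ℕ),
          (∀ e ∈ E, e.card = k) →
          (∀ e ∈ E, ∀ f ∈ E, e ≠ f → (e ∩ f).card ≤ 1) →
          (∀ v : V, (E.filter (fun e => v ∈ e)).card ≤ Δ) →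
          q ≤ 2 * Δ →
          C * Real.log (Fintype.card V) ≤ (q : ℝ) →
          500 * (k : ℝ) ^ 3 * (Δ : ℝ) ^ ((1 : ℝ) / ((k : ℝ) - 1)) ≤ (q : ℝ) →
          ∀ X Y : V → Fin q,
            X ∈ properColorings E q → Y ∈ properColorings E q →
            (∀ v : V, ¬ epsBadAt E k (1 / (50 * (k : ℝ) ^ 2)) X v) →
            (∀ v : V, ¬ epsBadAt E k (1 / (50 * (k : ℝ) ^ 2)) Y v) →
            Relation.ReflTransGen
              (fun A B : V → Fin q =>
                A ∈ properColorings E q ∧ B ∈ properColorings E q ∧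
                  (Finset.univ.filter (fun v => A v ≠ B v)).card = 1) X Y := by
  intro k hk
  refine ⟨100, by norm_num, ?_⟩
  intro V _ _ E q Δ hE hS hΔ hq2 hlog hqΔ X Y hX hY hgX hgY
  change Relation.ReflTransGen (glauberAdj E q) X Y
  have hk' : (3 : ℝ) ≤ k := by exact_mod_cast hk
  rcases Nat.eq_zero_or_pos Δ with h0 | hpos
  · -- here `q = 0`, so any two colorings are equal
    obtain rfl : q = 0 := by omega
    rw [show X = Y from funext fun w => (X w).elim0]
  have hd1 : (1 : ℝ) ≤ (Δ : ℝ) ^ ((1 : ℝ) / ((k : ℝ) - 1)) :=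
    Real.one_le_rpow (by exact_mod_cast hpos) (div_nonneg zero_le_one (by linarith))
  have hq100 : (100 : ℝ) ≤ q := by
    have h1 : (1 : ℝ) ≤ (k : ℝ) ^ 3 := one_le_pow₀ (by linarith)
    nlinarith
  have hqn : 100 ≤ q := by exact_mod_cast hq100
  refine reflTransGen_of_totalWt_le hS (fun e he => by rw [hE e he]; omega) (by omega)
    (Fintype.equivFin V) (Fintype.card V) 0 X Y (by simp) hX hY (fun w hw => by omega) ?_
  have hn : (Fintype.card V : ℝ) ≤ Real.exp (q / 100) := by
    rcases Nat.eq_zero_or_pos (Fintype.card V) with h | h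
    · rw [h, Nat.cast_zero]
      positivity
    · rw [← Real.log_le_iff_le_exp (by exact_mod_cast h)]
      linarith
  have h2 : (2 : ℝ) ≤ Real.exp (q / 100) := by
    have := Real.add_one_le_exp ((q : ℝ) / 100)
    linarith
  have hw : ∀ v, vertexWt E (fun v => (Fintype.equivFin V v : ℕ)) 0 X v
      + vertexWt E (fun v => (Fintype.equivFin V v : ℕ)) 0 Y v ≤ 2 * Real.exp (q / 50) := by
    intro v
    have h3 := vertexWt_zero_le hk (by omega) hE hΔ hqΔ
      (fun v => (Fintype.equivFin V v : ℕ)) X v (hgX v)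
    have h4 := vertexWt_zero_le hk (by omega) hE hΔ hqΔ
      (fun v => (Fintype.equivFin V v : ℕ)) Y v (hgY v)
    linarith
  calc totalWt E (fun v => (Fintype.equivFin V v : ℕ)) 0 X Y
      ≤ ∑ _v : V, 2 * Real.exp ((q : ℝ) / 50) := by
        unfold totalWt
        rw [filter_true_of_mem (fun v _ => Nat.zero_le _)]
        exact sum_le_sum fun v _ => hw v
    _ = Fintype.card V * (2 * Real.exp ((q : ℝ) / 50)) := by
        rw [sum_const, card_univ, nsmul_eq_mul]
    _ ≤ Real.exp (q / 100) * (Real.exp (q / 100) * Real.exp (q / 50)) := by gcongr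
    _ = Real.exp (q / 25) := by
        rw [← Real.exp_add, ← Real.exp_add]
        congr 1
        ring
    _ ≤ Real.exp (q / 10) := Real.exp_le_exp.2 (by linarith)
end
end

section
/- There is a constant C_k > 0 depending only on k with the following property. Let k ≥ 3, let H be a simple k-uniform hypergraph with n vertices and maximum degree Δ, suppose q ≤ 2Δ and q ≥ max{C_k·log n, 500·k³·Δ^{1/(k−1)}}, and set t₀ = ⌊n/(4k²e)⌋ and μ₁ = εq with ε = 1/(50k²). If the Glauber dynamics is started from any fixed ε-good coloring X₀ ∈ Ω, then with probability at least 1 − 2^{−μ₁/2} the coloring X_t is 2ε-good for every 0 ≤ t ≤ t₀. -/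
/-!
Fix a vertex `v` and an index `1 ≤ i ≤ k - 2`. Because the hypergraph is simple, the sets `e \ {v}`,
`e ∋ v`, are pairwise disjoint, so one Glauber step affects at most one of them. A step lowers the
number of colours on `e \ {v}` by at most one, and it can do so only by recolouring a vertex of
`e \ {v}` with a colour already present there. At a `2ε`-good state fewer than `2εq` colours are
forbidden anywhere, so each new colour has probability at most `2/q`, and a given edge loses a
colour with probability at most `p = 2k²/(nq)`.

An edge with `j` colours and `s` steps to go therefore receives the weight
`1 + (s p)^(j - i)` (`wt`, with truncated subtraction: the weight is `2` once `j ≤ i`), and the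
product `pot` of the weights over `e ∋ v` is a supermartingale at good states (`pot_step`), by the
recursion `wt_step`. With no steps left the potential is at least `2 ^ y_{v,i}`
(`one_le_pot_zero`). Initially there are at most `μ^j` edges with `j` colours, where `μ = εq ≥ 30`,
and `μ s p ≤ 1/100` for `s ≤ t₀`; hence the initial potential is at most `2 ^ (5/4 · μ^i)`
(`pot_init`). By Markov's inequality, the probability that the run is good up to time `s` and has
`y_{v,i} ≥ (2μ)^i` at time `s + 1` is at most `2 ^ (5/4 · μ^i - (2μ)^i) ≤ 2 ^ (-3μ/4)`.

A union bound over `(t, v, i)` (`goodRun_loss`) costs a factor at most `t₀ n k ≤ n²`, which the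
hypothesis `q ≥ C log n` with `C = 800k²` bounds by `2 ^ (μ/4)`.
-/

open Finset

noncomputable section
open Classical

variable {V : Type} [Fintype V] [DecidableEq V]

/-! ### Edge weights and the potential -/

/-- The number of distinct colours of `X` on `e \ {v}`. -/
def colCount {q : ℕ} (X : V → Fin q) (v : V) (e : Finset V) : ℕ :=
  ((e.erase v).image X).card

/-- The edges of `E` through `v`. -/
def edgesAt (E : Finset (Finset V)) (v : V) : Finset (Finset V) := E.filter (fun e => v ∈ e)

/-- The weight of an edge with `j` colours when `s` steps remain and `p` bounds the chance, per
step, that the edge loses a colour: an upper bound for the expectation of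
`1 + 𝟙[the edge ends with at most i colours]`. Subtraction is truncated on purpose, so the
weight is `2` as soon as `j ≤ i`. -/
def wt (p : ℝ) (i s j : ℕ) : ℝ := 1 + ((s : ℝ) * p) ^ (j - i)

/-- The potential at `v` of a colouring with `s` steps remaining: the product of the edge weights. -/
def pot (E : Finset (Finset V)) (p : ℝ) (v : V) (i : ℕ) {q : ℕ} (s : ℕ) (X : V → Fin q) : ℝ :=
  ∏ e ∈ edgesAt E v, wt p i s (colCount X v e)

lemma one_le_wt {p : ℝ} (hp : 0 ≤ p) (i s j : ℕ) : 1 ≤ wt p i s j := by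
  unfold wt
  have : 0 ≤ ((s : ℝ) * p) ^ (j - i) := by positivity
  linarith

lemma wt_anti {p : ℝ} (hp : 0 ≤ p) (i s : ℕ) (hs : (s : ℝ) * p ≤ 1) {j l : ℕ} (h : j ≤ l) :
    wt p i s l ≤ wt p i s j := by
  unfold wt
  have := pow_le_pow_of_le_one (by positivity : 0 ≤ (s : ℝ) * p) hs (Nat.sub_le_sub_right h i)
  linarith

/-- One step of the recursion: losing a colour with probability `p` turns the weights with `s`
steps remaining into something dominated by the weights with `s + 1` steps remaining. -/
lemma wt_step {p : ℝ} (hp : 0 ≤ p) (i s j : ℕ) :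
    wt p i s j + p * (wt p i s (j - 1) - wt p i s j) ≤ wt p i (s + 1) j := by
  unfold wt
  rcases Nat.lt_or_ge i j with h | h
  · obtain ⟨m, rfl⟩ : ∃ m, j = i + m + 1 := ⟨j - i - 1, by omega⟩
    have e1 : i + m + 1 - i = m + 1 := by omega
    have e2 : i + m + 1 - 1 - i = m := by omega
    rw [e1, e2]
    set a : ℝ := (s : ℝ) * p with ha
    have ha0 : 0 ≤ a := by positivity
    have hb : ((s + 1 : ℕ) : ℝ) * p = a + p := by push_cast; ring
    rw [hb]
    have h1 : a ^ m ≤ (a + p) ^ m := by gcongr; linarith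
    have h2 : a ^ m * (a + p) ≤ (a + p) ^ (m + 1) := by
      rw [pow_succ]; gcongr
    have h3 : 0 ≤ p * a ^ (m + 1) := by positivity
    rw [pow_succ] at h3 ⊢
    nlinarith
  · have e1 : j - i = 0 := by omega
    have e2 : j - 1 - i = 0 := by omega
    simp [e1, e2]

/-! ### Effect of a single recolouring -/

omit [Fintype V] in
/-- Recolouring one vertex removes at most one colour from `e \ {v}`, and does so only if that
vertex lies in `e \ {v}` and the new colour already occurs elsewhere on `e \ {v}`. -/
lemma colCount_update {q : ℕ} (X : V → Fin q) (v w : V) (c : Fin q) (e : Finset V) :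
    colCount X v e ≤ colCount (Function.update X w c) v e +
      (if w ∈ e.erase v ∧ c ∈ ((e.erase v).erase w).image X then 1 else 0) := by
  unfold colCount
  by_cases hw : w ∈ e.erase v
  · have hi : ((e.erase v).erase w).image (Function.update X w c)
        = ((e.erase v).erase w).image X := by
      apply Finset.image_congr
      intro x hx
      have : x ≠ w := by
        rintro rfl; simp at hx
      simp [Function.update_of_ne this]
    have h1 : (e.erase v).image X = insert (X w) (((e.erase v).erase w).image X) := by
      rw [← Finset.image_insert, Finset.insert_erase hw]
    have h2 : (e.erase v).image (Function.update X w c)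
        = insert c (((e.erase v).erase w).image X) := by
      conv_lhs => rw [← Finset.insert_erase hw]
      rw [Finset.image_insert, hi, Function.update_self]
    rw [h1, h2]
    have h3 := Finset.card_insert_le (X w) (((e.erase v).erase w).image X)
    by_cases hc : c ∈ ((e.erase v).erase w).image X
    · rw [if_pos ⟨hw, hc⟩, Finset.insert_eq_of_mem hc]; exact h3
    · rw [if_neg (fun h => hc h.2), Finset.card_insert_of_notMem hc]; exact h3
  · have hi : (e.erase v).image (Function.update X w c) = (e.erase v).image X := by
      apply Finset.image_congr
      intro x hx
      have : x ≠ w := by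
        rintro rfl; exact hw hx
      simp [Function.update_of_ne this]
    rw [hi]; exact Nat.le_add_right _ _

/-- A product of factors `1 + d e`, at most one of which is not `1`, is linear in `d`. -/
lemma prod_one_add_of_one {ι : Type*} (S : Finset ι) (d : ι → ℝ)
    (h : ∀ e ∈ S, ∀ f ∈ S, e ≠ f → d e = 0 ∨ d f = 0) :
    ∏ e ∈ S, (1 + d e) = 1 + ∑ e ∈ S, d e := by
  by_cases hz : ∃ e ∈ S, d e ≠ 0
  · obtain ⟨e, he, hd⟩ := hz
    have h0 : ∀ f ∈ S, f ≠ e → d f = 0 := fun f hf hne =>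
      (h e he f hf hne.symm).resolve_left hd
    rw [Finset.prod_eq_single_of_mem e he (fun f hf hne => by rw [h0 f hf hne, add_zero]),
      Finset.sum_eq_single_of_mem e he h0]
  · push Not at hz
    rw [Finset.sum_eq_zero hz, Finset.prod_eq_one (fun e he => by rw [hz e he, add_zero]), add_zero]

lemma one_add_sum_le_prod {ι : Type*} (S : Finset ι) (d : ι → ℝ) (h : ∀ e ∈ S, 0 ≤ d e) :
    1 + ∑ e ∈ S, d e ≤ ∏ e ∈ S, (1 + d e) := by
  induction S using Finset.induction_on with
  | empty => simp
  | insert a S ha ih =>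
    rw [Finset.sum_insert ha, Finset.prod_insert ha]
    have h1 := ih (fun e he => h e (Finset.mem_insert_of_mem he))
    have h2 := h a (Finset.mem_insert_self a S)
    have h3 : 0 ≤ ∑ e ∈ S, d e :=
      Finset.sum_nonneg (fun e he => h e (Finset.mem_insert_of_mem he))
    nlinarith

/-- The relative increase of the weight of an edge with `j` colours when it loses one. -/
def relInc (p : ℝ) (i s j : ℕ) : ℝ := (wt p i s (j - 1) - wt p i s j) / wt p i s j

lemma relInc_nonneg {p : ℝ} (hp : 0 ≤ p) (i s : ℕ) (hs : (s : ℝ) * p ≤ 1) (j : ℕ) :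
    0 ≤ relInc p i s j := by
  have h1 := one_le_wt hp i s j
  have h2 := wt_anti hp i s hs (Nat.sub_le j 1)
  exact div_nonneg (by linarith) (by linarith)

omit [Fintype V] in
lemma pot_nonneg (E : Finset (Finset V)) {p : ℝ} (hp : 0 ≤ p) (v : V) (i : ℕ) {q : ℕ} (s : ℕ)
    (X : V → Fin q) : 0 ≤ pot E p v i s X :=
  Finset.prod_nonneg fun _ _ => zero_le_one.trans (one_le_wt hp _ _ _)

omit [Fintype V] in
/-- Effect of recolouring one vertex on the potential. Since the hypergraph is simple, at most one
edge through `v` is affected, so the product over edges linearises. -/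
lemma pot_update (E : Finset (Finset V)) (hS : ∀ e ∈ E, ∀ f ∈ E, e ≠ f → (e ∩ f).card ≤ 1)
    {p : ℝ} (hp : 0 ≤ p) (v : V) (i : ℕ) {q : ℕ} (s : ℕ) (hs : (s : ℝ) * p ≤ 1)
    (X : V → Fin q) (w : V) (c : Fin q) :
    pot E p v i s (Function.update X w c) ≤ pot E p v i s X * (1 + ∑ e ∈ edgesAt E v,
      (if w ∈ e.erase v ∧ c ∈ ((e.erase v).erase w).image X then
        relInc p i s (colCount X v e) else 0)) := by
  rw [← prod_one_add_of_one]
  · unfold pot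
    rw [← Finset.prod_mul_distrib]
    apply Finset.prod_le_prod
    · intro e _
      exact zero_le_one.trans (one_le_wt hp _ _ _)
    · intro e _
      have hu := colCount_update X v w c e
      have hpos : 0 < wt p i s (colCount X v e) := lt_of_lt_of_le one_pos (one_le_wt hp _ _ _)
      split_ifs at hu ⊢ with hc
      · have : wt p i s (colCount X v e) * (1 + relInc p i s (colCount X v e))
            = wt p i s (colCount X v e - 1) := by
          unfold relInc; field_simp; ring
        rw [this]
        exact wt_anti hp i s hs (by omega)
      · rw [add_zero, mul_one]
        exact wt_anti hp i s hs (by omega)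
  · intro e he f hf hne
    by_contra! hcon
    have h1 : w ∈ e.erase v := by
      by_contra h; exact hcon.1 (if_neg (fun h' => h h'.1))
    have h2 : w ∈ f.erase v := by
      by_contra h; exact hcon.2 (if_neg (fun h' => h h'.1))
    simp only [edgesAt, Finset.mem_filter] at he hf
    simp only [Finset.mem_erase] at h1 h2
    have h3 := hS e he.1 f hf.1 hne
    exact h1.1 (Finset.card_le_one.mp h3 w (by simp [h1.2, h2.2]) v (by simp [he.2, hf.2]))

/-! ### One step of the dynamics -/

/-- Every forbidden colour at `v` is the colour of a monochromatic `e \ {v}`. -/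
lemma card_compl_availSet (E : Finset (Finset V)) {k : ℕ} (hk : 3 ≤ k)
    (hE : ∀ e ∈ E, e.card = k) {q : ℕ} (X : V → Fin q) (v : V) :
    q ≤ (availSet E X v).card + yCount E X v 1 := by
  have hsub : (availSet E X v)ᶜ ⊆ (E.filter
      (fun e => v ∈ e ∧ ((e.erase v).image X).card = 1)).biUnion (fun e => (e.erase v).image X) := by
    intro c hc
    simp only [availSet, Finset.mem_compl, Finset.mem_filter, Finset.mem_univ, true_and,
      not_not] at hc
    obtain ⟨e, he, hv, hw⟩ := hc
    have hne : (e.erase v).Nonempty := by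
      rw [← Finset.card_pos, Finset.card_erase_of_mem hv, hE e he]; omega
    have him : (e.erase v).image X = {c} := by
      ext d
      simp only [Finset.mem_image, Finset.mem_singleton]
      constructor
      · rintro ⟨a, ha, rfl⟩; exact hw a ha
      · rintro rfl
        obtain ⟨a, ha⟩ := hne
        exact ⟨a, ha, hw a ha⟩
    refine Finset.mem_biUnion.mpr ⟨e, ?_, ?_⟩
    · rw [Finset.mem_filter]; exact ⟨he, hv, by rw [him]; simp⟩
    · rw [him]; simp
  have h1 := (Finset.card_le_card hsub).trans Finset.card_biUnion_le
  rw [Finset.sum_congr rfl (fun e he => (Finset.mem_filter.mp he).2.2), Finset.card_compl,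
    Fintype.card_fin] at h1
  simp only [Finset.sum_const, smul_eq_mul, mul_one] at h1
  unfold yCount
  omega

/-- Expectation after one step, written as an average over the recoloured vertex and its colour. -/
lemma sum_stepProb_mul (E : Finset (Finset V)) {q : ℕ} (X : V → Fin q)
    (hA : ∀ w, (availSet E X w).Nonempty) (g : (V → Fin q) → ℝ) :
    ∑ Z, stepProb E X Z * g Z = (Fintype.card V : ℝ)⁻¹ * ∑ w : V,
      ((availSet E X w).card : ℝ)⁻¹ * ∑ c ∈ availSet E X w, g (Function.update X w c) := by
  unfold stepProb
  simp only [hA, if_true]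
  simp_rw [mul_assoc, ← Finset.mul_sum, Finset.sum_mul]
  rw [Finset.sum_comm]
  congr 1
  apply Finset.sum_congr rfl
  intro w _
  simp_rw [ite_mul, zero_mul]
  rw [← Finset.sum_filter, ← Finset.mul_sum]
  congr 1
  symm
  apply Finset.sum_bij (fun c _ => Function.update X w c)
  · intro c hc
    simp only [Finset.mem_filter, Finset.mem_univ, true_and]
    exact ⟨fun u hu => Function.update_of_ne hu _ _, by simpa using hc⟩
  · intro a _ b _ h
    simpa using congrFun h w
  · intro Z hZ
    simp only [Finset.mem_filter, Finset.mem_univ, true_and] at hZ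
    refine ⟨Z w, hZ.2, ?_⟩
    funext u
    by_cases hu : u = w
    · subst hu; simp
    · rw [Function.update_of_ne hu, hZ.1 u hu]
  · intros; rfl

lemma sum_stepProb (E : Finset (Finset V)) {q : ℕ} (X : V → Fin q) (hV : Nonempty V)
    (hA : ∀ w, (availSet E X w).Nonempty) : ∑ Z, stepProb E X Z = 1 := by
  have h := sum_stepProb_mul E X hA (fun _ => 1)
  simp only [mul_one, Finset.sum_const, nsmul_eq_mul] at h
  rw [h, Finset.sum_congr rfl (g := fun _ => (1 : ℝ))]
  · simp
  · intro w _
    exact inv_mul_cancel₀ (by exact_mod_cast (hA w).card_pos.ne')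

lemma stepProb_nonneg (E : Finset (Finset V)) {q : ℕ} (X Z : V → Fin q) : 0 ≤ stepProb E X Z := by
  unfold stepProb
  refine mul_nonneg (by positivity) (Finset.sum_nonneg fun w _ => ?_)
  split_ifs <;> positivity

/-- Average of the potential over the new colour of a given vertex `w`: each edge through `v` that
contains `w ≠ v` loses a colour with probability at most `k · (2 / q)`. -/
lemma pot_avg (E : Finset (Finset V)) (hS : ∀ e ∈ E, ∀ f ∈ E, e ≠ f → (e ∩ f).card ≤ 1)
    {k : ℕ} (hE : ∀ e ∈ E, e.card = k) {q : ℕ} (hq : 0 < q) (X : V → Fin q)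
    (w : V) (hA : (q : ℝ) / 2 ≤ (availSet E X w).card)
    {p : ℝ} (hp0 : 0 ≤ p) (v : V) (i s : ℕ) (hs : (s : ℝ) * p ≤ 1) :
    ((availSet E X w).card : ℝ)⁻¹ *
      ∑ c ∈ availSet E X w, pot E p v i s (Function.update X w c) ≤
      pot E p v i s X * (1 + ∑ e ∈ edgesAt E v, (if w ∈ e.erase v then
        k * (2 / (q : ℝ)) * relInc p i s (colCount X v e) else 0)) := by
  have hq' : (0 : ℝ) < q := by exact_mod_cast hq
  have hApos : (0 : ℝ) < (availSet E X w).card := lt_of_lt_of_le (by linarith) hA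
  have hP := pot_nonneg E hp0 v i s X
  calc _ ≤ ((availSet E X w).card : ℝ)⁻¹ * ∑ c ∈ availSet E X w, pot E p v i s X *
        (1 + ∑ e ∈ edgesAt E v,
      (if w ∈ e.erase v ∧ c ∈ ((e.erase v).erase w).image X then
        relInc p i s (colCount X v e) else 0)) := by
        gcongr with c hc
        exact pot_update E hS hp0 v i s hs X w c
    _ = pot E p v i s X * (1 + ∑ e ∈ edgesAt E v, ((availSet E X w).card : ℝ)⁻¹ *
          ∑ c ∈ availSet E X w, (if w ∈ e.erase v ∧ c ∈ ((e.erase v).erase w).image X then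
        relInc p i s (colCount X v e) else 0)) := by
        rw [← Finset.mul_sum, Finset.sum_add_distrib, Finset.sum_comm, ← Finset.mul_sum]
        have := hApos.ne'
        simp only [Finset.sum_const, nsmul_eq_mul, mul_one]
        field_simp
    _ ≤ _ := by
        refine mul_le_mul_of_nonneg_left (add_le_add_right (Finset.sum_le_sum fun e he => ?_) 1) hP
        have hr := relInc_nonneg hp0 i s hs (colCount X v e)
        by_cases hwe : w ∈ e.erase v
        · simp only [hwe, true_and, if_true]
          rw [← Finset.sum_filter, Finset.sum_const, nsmul_eq_mul, ← mul_assoc]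
          refine mul_le_mul_of_nonneg_right ?_ hr
          rw [mul_comm]
          have h1 : ((availSet E X w).filter
              (fun c => c ∈ ((e.erase v).erase w).image X)).card ≤ k := by
            refine (Finset.card_le_card (t := ((e.erase v).erase w).image X) ?_).trans ?_
            · intro c hc; exact (Finset.mem_filter.mp hc).2
            · refine Finset.card_image_le.trans ?_
              rw [← hE e (Finset.mem_filter.mp he).1]
              exact Finset.card_le_card ((Finset.erase_subset _ _).trans (Finset.erase_subset _ _))
          have h2 : ((availSet E X w).card : ℝ)⁻¹ ≤ 2 / q := by
            rw [← inv_div]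
            exact inv_anti₀ (by positivity) hA
          exact mul_le_mul (by exact_mod_cast h1) h2 (by positivity) (by positivity)
        · simp [hwe]

/-- The potential is a supermartingale as long as at least half of the colours are available
everywhere. -/
lemma pot_step (E : Finset (Finset V)) (hS : ∀ e ∈ E, ∀ f ∈ E, e ≠ f → (e ∩ f).card ≤ 1)
    {k : ℕ} (hE : ∀ e ∈ E, e.card = k) {q : ℕ} (hq : 0 < q) (X : V → Fin q)
    (hA : ∀ w, (q : ℝ) / 2 ≤ (availSet E X w).card)
    {p : ℝ} (hp : p = (Fintype.card V : ℝ)⁻¹ * (k * (k * (2 / (q : ℝ)))))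
    (v : V) (i s : ℕ) (hs : (s : ℝ) * p ≤ 1) :
    ∑ Z, stepProb E X Z * pot E p v i s Z ≤ pot E p v i (s + 1) X := by
  have hp0 : 0 ≤ p := by rw [hp]; positivity
  have hV : Nonempty V := ⟨v⟩
  have hn : (0 : ℝ) < Fintype.card V := by exact_mod_cast Fintype.card_pos
  have hq' : (0 : ℝ) < q := by exact_mod_cast hq
  have hAne : ∀ w, (availSet E X w).Nonempty := fun w => by
    have : (0 : ℝ) < (availSet E X w).card := lt_of_lt_of_le (by linarith) (hA w)
    rw [← Finset.card_pos]; exact_mod_cast this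
  rw [sum_stepProb_mul E X hAne]
  have hP := pot_nonneg E hp0 v i s X
  have hr := relInc_nonneg hp0 i s hs
  generalize hR : (fun e => relInc p i s (colCount X v e)) = R
  have hR' : ∀ e, relInc p i s (colCount X v e) = R e := fun e => by rw [← hR]
  have hr' : ∀ e, 0 ≤ R e := fun e => by rw [← hR']; exact hr _
  calc _ ≤ (Fintype.card V : ℝ)⁻¹ * ∑ w : V, pot E p v i s X *
        (1 + ∑ e ∈ edgesAt E v, (if w ∈ e.erase v then k * (2 / (q : ℝ)) * R e else 0)) := by
        refine mul_le_mul_of_nonneg_left (Finset.sum_le_sum fun w _ => ?_) (by positivity)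
        simp_rw [← hR']
        exact pot_avg E hS hE hq X w (hA w) hp0 v i s hs
    _ = pot E p v i s X * (1 + ∑ e ∈ edgesAt E v, (Fintype.card V : ℝ)⁻¹ *
          ((e.erase v).card * (k * (2 / (q : ℝ)) * R e))) := by
        rw [← Finset.mul_sum, Finset.sum_add_distrib, Finset.sum_comm, ← Finset.mul_sum]
        simp only [Finset.sum_ite_mem, Finset.univ_inter, Finset.sum_const, nsmul_eq_mul, mul_one,
          Finset.card_univ]
        generalize ∑ e ∈ edgesAt E v, ((e.erase v).card : ℝ) * (k * (2 / (q : ℝ)) * R e) = S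
        field_simp
    _ ≤ pot E p v i s X * (1 + ∑ e ∈ edgesAt E v, p * R e) := by
        refine mul_le_mul_of_nonneg_left (add_le_add_right (Finset.sum_le_sum fun e he => ?_) 1) hP
        have hc : ((e.erase v).card : ℝ) ≤ k := by
          rw [← hE e (Finset.mem_filter.mp he).1]
          exact_mod_cast Finset.card_le_card (Finset.erase_subset _ _)
        rw [hp, show (Fintype.card V : ℝ)⁻¹ * (k * (k * (2 / (q : ℝ)))) * R e
          = (Fintype.card V : ℝ)⁻¹ * (k * (k * (2 / (q : ℝ)) * R e)) by ring]
        have := hr' e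
        gcongr
    _ ≤ pot E p v i s X * ∏ e ∈ edgesAt E v, (1 + p * R e) :=
        mul_le_mul_of_nonneg_left (one_add_sum_le_prod _ _ fun e _ => mul_nonneg hp0 (hr' e)) hP
    _ ≤ _ := by
        unfold pot
        rw [← Finset.prod_mul_distrib]
        apply Finset.prod_le_prod
        · intro e _
          exact mul_nonneg (zero_le_one.trans (one_le_wt hp0 _ _ _))
            (add_nonneg zero_le_one (mul_nonneg hp0 (hr' e)))
        · intro e _
          refine le_trans (le_of_eq ?_) (wt_step hp0 i s (colCount X v e))
          have hpos : 0 < wt p i s (colCount X v e) := lt_of_lt_of_le one_pos (one_le_wt hp0 _ _ _)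
          rw [← hR']
          unfold relInc
          field_simp

/-! ### Terminal and initial values of the potential -/

omit [Fintype V] in
/-- With no steps remaining, the potential dominates the indicator of having at least `a` edges
with exactly `i` colours, up to the Markov factor `2 ^ a`. -/
lemma one_le_pot_zero (E : Finset (Finset V)) {p : ℝ} (hp : 0 ≤ p) (v : V) (i : ℕ) {q : ℕ}
    (Z : V → Fin q) {a : ℝ} (ha : a ≤ yCount E Z v i) :
    1 ≤ (2 : ℝ) ^ (-a) * pot E p v i 0 Z := by
  have h1 : (2 : ℝ) ^ a ≤ pot E p v i 0 Z := by
    calc (2 : ℝ) ^ a ≤ (2 : ℝ) ^ (yCount E Z v i : ℝ) :=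
          Real.rpow_le_rpow_of_exponent_le one_le_two ha
      _ = ∏ e ∈ (edgesAt E v).filter (fun e => colCount Z v e = i), (2 : ℝ) := by
          rw [Real.rpow_natCast, Finset.prod_const]
          congr 1
          unfold yCount edgesAt colCount
          rw [Finset.filter_filter]
      _ = ∏ e ∈ (edgesAt E v).filter (fun e => colCount Z v e = i), wt p i 0 (colCount Z v e) := by
          apply Finset.prod_congr rfl
          intro e he
          rw [(Finset.mem_filter.mp he).2]
          unfold wt
          norm_num
      _ ≤ _ := by
          unfold pot
          rw [Finset.prod_filter]
          apply Finset.prod_le_prod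
          · intro e _
            split_ifs
            · exact zero_le_one.trans (one_le_wt hp _ _ _)
            · exact zero_le_one
          · intro e _
            split_ifs
            · exact le_rfl
            · exact one_le_wt hp _ _ _
  rw [Real.rpow_neg zero_le_two]
  have h2 : (0 : ℝ) < 2 ^ a := by positivity
  rw [inv_mul_eq_div, le_div_iff₀ h2]
  linarith

/-- Exponent (to base `2`) bounding the weight of an edge with `j` colours, where `x` stands for
`s p`; see `wt_le_expo`. -/
def expo (x : ℝ) (i j : ℕ) : ℝ := if j ≤ i then 1 else 2 * x ^ (j - i)

lemma wt_le_expo {p : ℝ} (hp : 0 ≤ p) (i s j : ℕ) :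
    wt p i s j ≤ (2 : ℝ) ^ expo ((s : ℝ) * p) i j := by
  unfold wt expo
  split_ifs with h
  · rw [Nat.sub_eq_zero_of_le h]; norm_num
  -- `1 + y ≤ exp y ≤ 4 ^ y`
  · set y := ((s : ℝ) * p) ^ (j - i)
    have hy : 0 ≤ y := by positivity
    have h4 : Real.exp 1 ≤ 4 := by linarith [Real.exp_one_lt_d9]
    calc 1 + y ≤ Real.exp y := by linarith [Real.add_one_le_exp y]
      _ = Real.exp 1 ^ y := by rw [Real.exp_one_rpow]
      _ ≤ 4 ^ y := Real.rpow_le_rpow (Real.exp_pos _).le h4 hy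
      _ = 2 ^ (2 * y) := by rw [Real.rpow_mul zero_le_two]; norm_num

/-- The numerical heart: `∑ⱼ μ^j · expo j` is at most `(5/4) μ^i`. The terms up to `i` form a
geometric sum dominated by its last term, those after `i` decay geometrically. -/
lemma sum_expo_le {μ x : ℝ} (hμ : 30 ≤ μ) (hx : 0 ≤ x) (hμx : μ * x ≤ 1 / 100) (i m : ℕ) :
    ∑ j ∈ Finset.Icc 1 m, μ ^ j * expo x i j ≤ 5 / 4 * μ ^ i := by
  have hμ0 : 0 < μ := by linarith
  have h1 : ∀ m ≤ i, ∑ j ∈ Finset.Icc 1 m, μ ^ j * expo x i j ≤ 11 / 10 * μ ^ m := by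
    intro m
    induction m with
    | zero => intro _; simp; norm_num
    | succ m ih =>
      intro hm
      rw [Finset.sum_Icc_succ_top (by omega)]
      have := ih (by omega)
      have he : expo x i (m + 1) = 1 := if_pos hm
      rw [he]
      have hp : 0 < μ ^ m := by positivity
      rw [pow_succ]
      nlinarith
  have h2 : ∀ d, ∑ j ∈ Finset.Icc 1 (i + d), μ ^ j * expo x i j
      ≤ μ ^ i * (11 / 10 + 1 / 10 * (1 - (1 / 100) ^ d)) := by
    intro d
    induction d with
    | zero => have := h1 i le_rfl; simp only [add_zero, pow_zero]; linarith
    | succ d ih =>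
      rw [← add_assoc, Finset.sum_Icc_succ_top (by omega)]
      have he : expo x i (i + d + 1) = 2 * x ^ (d + 1) := by
        unfold expo
        rw [if_neg (by omega)]
        congr 2
        omega
      have h3 : (μ * x) ^ (d + 1) ≤ (1 / 100) ^ (d + 1) := pow_le_pow_left₀ (by positivity) hμx _
      have h4 : μ ^ (i + d + 1) * (2 * x ^ (d + 1)) = μ ^ i * (2 * (μ * x) ^ (d + 1)) := by
        rw [mul_pow]; ring
      rw [he, h4]
      have hp : 0 < μ ^ i := by positivity
      have h5 : (0 : ℝ) < (1 / 100) ^ d := by positivity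
      calc _ ≤ μ ^ i * (11 / 10 + 1 / 10 * (1 - (1 / 100) ^ d)) +
            μ ^ i * (2 * (1 / 100) ^ (d + 1)) := by gcongr
        _ ≤ _ := by
            rw [← mul_add]
            refine mul_le_mul_of_nonneg_left ?_ hp.le
            rw [pow_succ]
            linarith
  rcases le_total m i with h | h
  · refine (h1 m h).trans ?_
    have : μ ^ m ≤ μ ^ i := pow_le_pow_right₀ (by linarith) h
    have : 0 < μ ^ i := by positivity
    linarith
  · obtain ⟨d, rfl⟩ := Nat.exists_eq_add_of_le h
    refine (h2 d).trans ?_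
    have hp : 0 < μ ^ i := by positivity
    have h5 : (0 : ℝ) < (1 / 100) ^ d := by positivity
    nlinarith [mul_pos hp h5]

omit [Fintype V] in
/-- The potential of the initial colouring. -/
lemma pot_init (E : Finset (Finset V)) {k : ℕ} (hk : 3 ≤ k) (hE : ∀ e ∈ E, e.card = k) {q : ℕ}
    {p : ℝ} (hp : 0 ≤ p) (v : V) (i s : ℕ) (X : V → Fin q) {μ : ℝ} (hμ : 30 ≤ μ)
    (hμx : μ * ((s : ℝ) * p) ≤ 1 / 100)
    (hy : ∀ j, 1 ≤ j → j ≤ k - 1 → (yCount E X v j : ℝ) ≤ μ ^ j) :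
    pot E p v i s X ≤ (2 : ℝ) ^ (5 / 4 * μ ^ i) := by
  have hx : 0 ≤ (s : ℝ) * p := by positivity
  calc pot E p v i s X
      ≤ ∏ e ∈ edgesAt E v, (2 : ℝ) ^ expo ((s : ℝ) * p) i (colCount X v e) := by
        unfold pot
        exact Finset.prod_le_prod (fun e _ => zero_le_one.trans (one_le_wt hp _ _ _))
          (fun e _ => wt_le_expo hp _ _ _)
    _ = (2 : ℝ) ^ ∑ e ∈ edgesAt E v, expo ((s : ℝ) * p) i (colCount X v e) :=
        (Real.rpow_sum_of_pos two_pos _ _).symm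
    _ ≤ _ := by
        apply Real.rpow_le_rpow_of_exponent_le one_le_two
        refine le_trans ?_ (sum_expo_le hμ hx hμx i (k - 1))
        have hmaps : ∀ e ∈ edgesAt E v, colCount X v e ∈ Finset.Icc 1 (k - 1) := by
          intro e he
          obtain ⟨he, hv⟩ := Finset.mem_filter.mp he
          have hc : (e.erase v).card = k - 1 := by rw [Finset.card_erase_of_mem hv, hE e he]
          rw [Finset.mem_Icc]
          constructor
          · refine Finset.card_pos.mpr (Finset.Nonempty.image ?_ _)
            rw [← Finset.card_pos]; omega
          · rw [← hc]; exact Finset.card_image_le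
        rw [← Finset.sum_fiberwise_of_maps_to hmaps]
        apply Finset.sum_le_sum
        intro j hj
        rw [Finset.mem_Icc] at hj
        rw [Finset.sum_congr rfl (g := fun _ => expo ((s : ℝ) * p) i j)
          (fun e he => by rw [(Finset.mem_filter.mp he).2]), Finset.sum_const, nsmul_eq_mul]
        have hc : ((edgesAt E v).filter (fun e => colCount X v e = j)).card = yCount E X v j := by
          unfold yCount edgesAt colCount
          rw [Finset.filter_filter]
        rw [hc]
        have h0 : 0 ≤ expo ((s : ℝ) * p) i j := by unfold expo; split_ifs <;> positivity
        exact mul_le_mul_of_nonneg_right (hy j hj.1 hj.2) h0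

/-! ### Good runs -/

lemma goodRunDist_nonneg (E : Finset (Finset V)) (k : ℕ) {q : ℕ} (ε : ℝ) (X₀ : V → Fin q) :
    ∀ (t : ℕ) (Z : V → Fin q), 0 ≤ goodRunDist E k ε X₀ t Z
  | 0, Z => by unfold goodRunDist; split_ifs <;> norm_num
  | t + 1, Z => by
    unfold goodRunDist
    split_ifs
    · exact Finset.sum_nonneg fun X _ =>
        mul_nonneg (goodRunDist_nonneg E k ε X₀ t X) (stepProb_nonneg E X Z)
    · exact le_rfl

lemma goodRunDist_eq_zero (E : Finset (Finset V)) (k : ℕ) {q : ℕ} (ε : ℝ) (X₀ : V → Fin q)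
    (t : ℕ) (Z : V → Fin q) (hZ : ¬ ∀ v, ¬ epsBadAt E k ε Z v) : goodRunDist E k ε X₀ t Z = 0 := by
  cases t with
  | zero => unfold goodRunDist; exact if_neg fun h => hZ h.2
  | succ t => unfold goodRunDist; exact if_neg hZ

lemma goodRunDist_succ (E : Finset (Finset V)) (k : ℕ) {q : ℕ} (ε : ℝ) (X₀ : V → Fin q)
    (t : ℕ) (Z : V → Fin q) :
    goodRunDist E k ε X₀ (t + 1) Z = if (∀ v : V, ¬ epsBadAt E k ε Z v)
      then ∑ X : V → Fin q, goodRunDist E k ε X₀ t X * stepProb E X Z else 0 := rfl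

lemma goodRunDist_succ_le (E : Finset (Finset V)) (k : ℕ) {q : ℕ} (ε : ℝ) (X₀ : V → Fin q)
    (t : ℕ) (Z : V → Fin q) :
    goodRunDist E k ε X₀ (t + 1) Z ≤ ∑ X, goodRunDist E k ε X₀ t X * stepProb E X Z := by
  rw [goodRunDist_succ]
  split_ifs
  · exact le_rfl
  · exact Finset.sum_nonneg fun X _ =>
      mul_nonneg (goodRunDist_nonneg E k ε X₀ t X) (stepProb_nonneg E X Z)

/-- Optional stopping in the form needed here: a nonnegative family `G` that contracts at good
states has, along good runs, expectation at most its initial value. -/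
lemma goodRun_super (E : Finset (Finset V)) (k : ℕ) {q : ℕ} (ε : ℝ) (X₀ : V → Fin q)
    (G : ℕ → (V → Fin q) → ℝ) (hG0 : ∀ r Z, 0 ≤ G r Z) (T : ℕ)
    (hG : ∀ r < T, ∀ X : V → Fin q, (∀ v, ¬ epsBadAt E k ε X v) →
      ∑ Z, stepProb E X Z * G r Z ≤ G (r + 1) X) :
    ∀ s r : ℕ, r + s ≤ T → ∑ X, goodRunDist E k ε X₀ s X * G r X ≤ G (r + s) X₀ := by
  intro s
  induction s with
  | zero =>
    intro r _
    rw [Finset.sum_eq_single X₀]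
    · simp only [goodRunDist, add_zero, true_and]
      split_ifs
      · rw [one_mul]
      · rw [zero_mul]; exact hG0 _ _
    · intro X _ hX
      simp [goodRunDist, hX]
    · simp
  | succ s ih =>
    intro r hr
    calc _ ≤ ∑ Z, (∑ X, goodRunDist E k ε X₀ s X * stepProb E X Z) * G r Z :=
          Finset.sum_le_sum fun Z _ =>
            mul_le_mul_of_nonneg_right (goodRunDist_succ_le E k ε X₀ s Z) (hG0 r Z)
      _ = ∑ X, goodRunDist E k ε X₀ s X * ∑ Z, stepProb E X Z * G r Z := by
          simp_rw [Finset.sum_mul, Finset.mul_sum]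
          rw [Finset.sum_comm]
          simp_rw [mul_assoc]
      _ ≤ ∑ X, goodRunDist E k ε X₀ s X * G (r + 1) X := by
          apply Finset.sum_le_sum
          intro X _
          by_cases hX : ∀ v, ¬ epsBadAt E k ε X v
          · exact mul_le_mul_of_nonneg_left (hG r (by omega) X hX) (goodRunDist_nonneg E k ε X₀ s X)
          · rw [goodRunDist_eq_zero E k ε X₀ s X hX, zero_mul, zero_mul]
      _ ≤ _ := by
          have := ih (r + 1) (by omega)
          rwa [show r + 1 + s = r + (s + 1) by omega] at this

/-- The mass lost by the good run in one step: a union bound over the possible violations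
`(v, i)`, each controlled by a supermartingale `G v i` whose terminal value, scaled by `a v i`,
dominates the indicator of the violation. -/
lemma goodRun_loss (E : Finset (Finset V)) (k : ℕ) {q : ℕ} (ε : ℝ) (X₀ : V → Fin q)
    (hstep : ∀ X : V → Fin q, (∀ v, ¬ epsBadAt E k ε X v) → ∑ Z, stepProb E X Z = 1)
    (G : V → ℕ → ℕ → (V → Fin q) → ℝ) (hG0 : ∀ v i r Z, 0 ≤ G v i r Z) (T : ℕ)
    (hG : ∀ v i, ∀ r < T, ∀ X : V → Fin q, (∀ v, ¬ epsBadAt E k ε X v) →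
      ∑ Z, stepProb E X Z * G v i r Z ≤ G v i (r + 1) X)
    (a : V → ℕ → ℝ) (ha0 : ∀ v i, 0 ≤ a v i)
    (ha : ∀ v i (Z : V → Fin q), 1 ≤ i → (ε * (q : ℝ)) ^ i ≤ yCount E Z v i → 1 ≤ a v i * G v i 0 Z)
    (s : ℕ) (hs : s + 1 ≤ T) :
    ∑ Z, goodRunDist E k ε X₀ s Z - ∑ v, ∑ i ∈ Finset.Icc 1 (k - 2), a v i * G v i (s + 1) X₀
      ≤ ∑ Z, goodRunDist E k ε X₀ (s + 1) Z := by
  have h1 : ∑ Z, goodRunDist E k ε X₀ s Z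
      = ∑ Z, ∑ X, goodRunDist E k ε X₀ s X * stepProb E X Z := by
    rw [Finset.sum_comm]
    apply Finset.sum_congr rfl
    intro X _
    rw [← Finset.mul_sum]
    by_cases hX : ∀ v, ¬ epsBadAt E k ε X v
    · rw [hstep X hX, mul_one]
    · rw [goodRunDist_eq_zero E k ε X₀ s X hX, zero_mul]
  -- pointwise: the mass arriving at a bad state is charged to one of its violations
  have h2 : ∀ Z, ∑ X, goodRunDist E k ε X₀ s X * stepProb E X Z ≤ goodRunDist E k ε X₀ (s + 1) Z +
      ∑ v, ∑ i ∈ Finset.Icc 1 (k - 2), a v i *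
        ((∑ X, goodRunDist E k ε X₀ s X * stepProb E X Z) * G v i 0 Z) := by
    intro Z
    set m := ∑ X, goodRunDist E k ε X₀ s X * stepProb E X Z with hm
    have hm0 : 0 ≤ m := Finset.sum_nonneg fun X _ =>
      mul_nonneg (goodRunDist_nonneg E k ε X₀ s X) (stepProb_nonneg E X Z)
    have hterm : ∀ v i, 0 ≤ a v i * (m * G v i 0 Z) := fun v i =>
      mul_nonneg (ha0 v i) (mul_nonneg hm0 (hG0 v i 0 Z))
    by_cases hZ : ∀ v, ¬ epsBadAt E k ε Z v
    · have : goodRunDist E k ε X₀ (s + 1) Z = m := by rw [goodRunDist_succ, if_pos hZ]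
      rw [this]
      have : 0 ≤ ∑ v, ∑ i ∈ Finset.Icc 1 (k - 2), a v i * (m * G v i 0 Z) :=
        Finset.sum_nonneg fun v _ => Finset.sum_nonneg fun i _ => hterm v i
      linarith
    · have h0 := goodRunDist_nonneg E k ε X₀ (s + 1) Z
      push Not at hZ
      obtain ⟨v, i, hi1, hi2, hbad⟩ := hZ
      have h3 := ha v i Z hi1 hbad
      have h4 : m ≤ a v i * (m * G v i 0 Z) := by nlinarith
      have h5 : a v i * (m * G v i 0 Z) ≤ ∑ i ∈ Finset.Icc 1 (k - 2), a v i * (m * G v i 0 Z) :=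
        Finset.single_le_sum (f := fun i => a v i * (m * G v i 0 Z)) (fun i _ => hterm v i)
          (Finset.mem_Icc.mpr ⟨hi1, hi2⟩)
      have h6 : ∑ i ∈ Finset.Icc 1 (k - 2), a v i * (m * G v i 0 Z) ≤
          ∑ v, ∑ i ∈ Finset.Icc 1 (k - 2), a v i * (m * G v i 0 Z) :=
        Finset.single_le_sum
          (f := fun v => ∑ i ∈ Finset.Icc 1 (k - 2), a v i * (m * G v i 0 Z))
          (fun v _ => Finset.sum_nonneg fun i _ => hterm v i) (Finset.mem_univ v)
      linarith
  have h3 : ∀ v i, ∑ Z, (∑ X, goodRunDist E k ε X₀ s X * stepProb E X Z) * G v i 0 Z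
      ≤ G v i (s + 1) X₀ := by
    intro v i
    calc _ = ∑ X, goodRunDist E k ε X₀ s X * ∑ Z, stepProb E X Z * G v i 0 Z := by
          simp_rw [Finset.sum_mul, Finset.mul_sum]
          rw [Finset.sum_comm]
          simp_rw [mul_assoc]
      _ ≤ ∑ X, goodRunDist E k ε X₀ s X * G v i 1 X := by
          apply Finset.sum_le_sum
          intro X _
          by_cases hX : ∀ v, ¬ epsBadAt E k ε X v
          · exact mul_le_mul_of_nonneg_left (hG v i 0 (by omega) X hX)
              (goodRunDist_nonneg E k ε X₀ s X)
          · rw [goodRunDist_eq_zero E k ε X₀ s X hX, zero_mul, zero_mul]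
      _ ≤ _ := by
          have := goodRun_super E k ε X₀ (G v i) (hG0 v i) T (hG v i) s 1 (by omega)
          rwa [add_comm 1 s] at this
  have h4 := Finset.sum_le_sum fun Z (_ : Z ∈ Finset.univ) => h2 Z
  rw [Finset.sum_add_distrib, ← h1] at h4
  have h5 : ∑ Z, ∑ v, ∑ i ∈ Finset.Icc 1 (k - 2), a v i *
        ((∑ X, goodRunDist E k ε X₀ s X * stepProb E X Z) * G v i 0 Z)
      ≤ ∑ v, ∑ i ∈ Finset.Icc 1 (k - 2), a v i * G v i (s + 1) X₀ := by
    rw [Finset.sum_comm]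
    apply Finset.sum_le_sum
    intro v _
    rw [Finset.sum_comm]
    apply Finset.sum_le_sum
    intro i _
    rw [← Finset.mul_sum]
    exact mul_le_mul_of_nonneg_left (h3 v i) (ha0 v i)
  linarith

/-! ### Persistence of goodness -/

set_option maxHeartbeats 2000000

/-- **Lemma (persistence of goodness).** For every `k ≥ 3` there is `C_k > 0` such that under
the hypotheses of the main theorem, with `ε = 1/(50k²)`, `μ₁ = εq` and `t₀ = ⌊n/(4k²e)⌋`:
if the Glauber dynamics is started from any fixed `ε`-good coloring `X₀`, then with
probability at least `1 - 2^{-μ₁/2}` the coloring `X_t` is `2ε`-good for every `0 ≤ t ≤ t₀`. -/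
theorem stays_two_eps_good :
    ∀ k : ℕ, 3 ≤ k → ∃ C : ℝ, 0 < C ∧
      ∀ (V : Type) [Fintype V] [DecidableEq V], Nonempty V →
        ∀ (E : Finset (Finset V)) (q Δ : ℕ),
          (∀ e ∈ E, e.card = k) →
          (∀ e ∈ E, ∀ f ∈ E, e ≠ f → (e ∩ f).card ≤ 1) →
          (∀ v : V, (E.filter (fun e => v ∈ e)).card ≤ Δ) →
          q ≤ 2 * Δ →
          C * Real.log (Fintype.card V) ≤ (q : ℝ) →
          500 * (k : ℝ) ^ 3 * (Δ : ℝ) ^ ((1 : ℝ) / ((k : ℝ) - 1)) ≤ (q : ℝ) →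
          ∀ X₀ : V → Fin q,
            (∀ v : V, ¬ epsBadAt E k (1 / (50 * (k : ℝ) ^ 2)) X₀ v) →
            1 - (2 : ℝ) ^ (-((1 / (50 * (k : ℝ) ^ 2)) * (q : ℝ)) / 2) ≤
              ∑ Z : V → Fin q,
                goodRunDist E k (2 * (1 / (50 * (k : ℝ) ^ 2))) X₀
                  (Nat.floor ((Fintype.card V : ℝ) / (4 * (k : ℝ) ^ 2 * Real.exp 1))) Z := by
  intro k hk
  refine ⟨800 * (k : ℝ) ^ 2, by positivity, ?_⟩
  intro V _ _ hV E q Δ hE hS hdeg hqΔ hlog hq X₀ hX₀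
  obtain ⟨v₀⟩ := hV
  have hk3 : (3 : ℝ) ≤ k := by exact_mod_cast hk
  have hk0 : (0 : ℝ) < k := by linarith
  have hqpos : 0 < q := Fin.pos (X₀ v₀)
  have hq1 : (1 : ℝ) ≤ q := by exact_mod_cast hqpos
  have hq0 : (0 : ℝ) < q := by linarith
  have hn1 : (1 : ℝ) ≤ Fintype.card V := by
    exact_mod_cast Fintype.card_pos_iff.mpr ⟨v₀⟩
  set n : ℝ := (Fintype.card V : ℝ) with hn
  have hn0 : 0 < n := by linarith
  set ε : ℝ := 1 / (50 * (k : ℝ) ^ 2) with hε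
  have hεk : ε * (50 * (k : ℝ) ^ 2) = 1 := by rw [hε]; field_simp
  have hε0 : 0 < ε := by positivity
  have hεle : ε ≤ 1 / 450 := by
    rw [hε]
    apply one_div_le_one_div_of_le (by norm_num)
    nlinarith
  set μ : ℝ := ε * q with hμ
  have hμ0 : 0 < μ := by positivity
  have hΔ1 : (1 : ℝ) ≤ Δ := by
    have : 1 ≤ Δ := by omega
    exact_mod_cast this
  -- `D = Δ^(1/(k-1))` is the threshold in the lower bound on `q`
  set D : ℝ := (Δ : ℝ) ^ ((1 : ℝ) / ((k : ℝ) - 1)) with hD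
  have hD1 : 1 ≤ D := Real.one_le_rpow hΔ1 (by
    apply div_nonneg zero_le_one; linarith)
  have hDpow : D ^ (k - 1) = Δ := by
    rw [hD, ← Real.rpow_natCast, ← Real.rpow_mul (by linarith), Nat.cast_sub (by omega),
      Nat.cast_one, one_div_mul_cancel (by linarith), Real.rpow_one]
  have hμD : 10 * k * D ≤ μ := by
    calc 10 * k * D = ε * (50 * (k : ℝ) ^ 2) * (10 * k * D) := by rw [hεk, one_mul]
      _ = ε * (500 * (k : ℝ) ^ 3 * D) := by ring
      _ ≤ μ := mul_le_mul_of_nonneg_left hq hε0.le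
  have hμ30 : 30 ≤ μ := by nlinarith
  have hΔμ : (Δ : ℝ) ≤ μ ^ (k - 1) := by
    rw [← hDpow]
    apply pow_le_pow_left₀ (by linarith)
    nlinarith
  have hy : ∀ v j, 1 ≤ j → j ≤ k - 1 → (yCount E X₀ v j : ℝ) ≤ μ ^ j := by
    intro v j hj1 hj2
    by_cases hj : j ≤ k - 2
    · by_contra hcon
      exact hX₀ v ⟨j, hj1, hj, (not_le.mp hcon).le⟩
    · obtain rfl : j = k - 1 := by omega
      refine le_trans ?_ hΔμ
      have : yCount E X₀ v (k - 1) ≤ Δ := by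
        refine le_trans (Finset.card_le_card ?_) (hdeg v)
        intro e he
        simp only [Finset.mem_filter] at he ⊢
        exact ⟨he.1, he.2.1⟩
      exact_mod_cast this
  set T : ℕ := Nat.floor (n / (4 * (k : ℝ) ^ 2 * Real.exp 1)) with hT
  have hTle : (T : ℝ) * (8 * (k : ℝ) ^ 2) ≤ n := by
    have h1 : (T : ℝ) ≤ n / (4 * (k : ℝ) ^ 2 * Real.exp 1) := Nat.floor_le (by positivity)
    rw [le_div_iff₀ (by positivity)] at h1
    refine le_trans ?_ h1
    have h2 : (2 : ℝ) ≤ Real.exp 1 := by linarith [Real.add_one_le_exp (1 : ℝ)]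
    apply mul_le_mul_of_nonneg_left _ (Nat.cast_nonneg T)
    nlinarith [sq_nonneg (k : ℝ)]
  obtain ⟨p, hp⟩ : ∃ p : ℝ, p = n⁻¹ * (k * (k * (2 / (q : ℝ)))) := ⟨_, rfl⟩
  have hp0 : 0 ≤ p := by rw [hp]; positivity
  have hTp : ∀ s : ℕ, s ≤ T → (s : ℝ) * p * q ≤ 1 / 4 := by
    intro s hs
    have h1 : (s : ℝ) ≤ T := by exact_mod_cast hs
    have h2 : (s : ℝ) * p * q = (s : ℝ) * (8 * (k : ℝ) ^ 2) / n / 4 := by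
      rw [hp]; field_simp; ring
    have h3 : (s : ℝ) * (8 * (k : ℝ) ^ 2) / n ≤ 1 := by
      rw [div_le_one hn0]
      exact le_trans (mul_le_mul_of_nonneg_right h1 (by positivity)) hTle
    rw [h2]; linarith
  have hTp1 : ∀ s : ℕ, s ≤ T → (s : ℝ) * p ≤ 1 := by
    intro s hs
    have h1 := hTp s hs
    have h2 : 0 ≤ (s : ℝ) * p := by positivity
    nlinarith
  have hμTp : ∀ s : ℕ, s ≤ T → μ * ((s : ℝ) * p) ≤ 1 / 100 := by
    intro s hs
    have h1 := hTp s hs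
    calc μ * ((s : ℝ) * p) = ε * ((s : ℝ) * p * q) := by rw [hμ]; ring
      _ ≤ ε * (1 / 4) := mul_le_mul_of_nonneg_left h1 hε0.le
      _ ≤ 1 / 100 := by linarith
  -- at good states at least half of the colours are available everywhere
  have hA : ∀ X : V → Fin q, (∀ v, ¬ epsBadAt E k (2 * ε) X v) →
      ∀ w, (q : ℝ) / 2 ≤ (availSet E X w).card := by
    intro X hX w
    have h1 : (yCount E X w 1 : ℝ) < 2 * ε * q := by
      by_contra hcon
      exact hX w ⟨1, le_rfl, by omega, by rw [pow_one]; exact not_lt.mp hcon⟩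
    have h2 : (q : ℝ) ≤ (availSet E X w).card + yCount E X w 1 := by
      exact_mod_cast card_compl_availSet E hk hE X w
    nlinarith
  have hstep : ∀ X : V → Fin q, (∀ v, ¬ epsBadAt E k (2 * ε) X v) → ∑ Z, stepProb E X Z = 1 := by
    intro X hX
    refine sum_stepProb E X ⟨v₀⟩ fun w => ?_
    have : (0 : ℝ) < (availSet E X w).card := lt_of_lt_of_le (by linarith) (hA X hX w)
    rw [← Finset.card_pos]; exact_mod_cast this
  have hloss := goodRun_loss E k (2 * ε) X₀ hstep (fun v i s X => pot E p v i s X)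
    (fun v i r Z => pot_nonneg E hp0 v i r Z) T
    (fun v i r hr X hX => pot_step E hS hE hqpos X (hA X hX) hp v i r (hTp1 r hr.le))
    (fun _ i => (2 : ℝ) ^ (-(2 * ε * q) ^ i)) (fun _ _ => by positivity)
    (fun v i Z _ hb => one_le_pot_zero E hp0 v i Z hb)
  set β : ℝ := (2 : ℝ) ^ (-(3 / 4 * μ)) with hβ
  have hβ0 : 0 < β := by positivity
  -- Markov's inequality for one vertex, one index and one time
  have hterm : ∀ s, s ≤ T → ∀ v, ∀ i ∈ Finset.Icc 1 (k - 2),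
      (2 : ℝ) ^ (-(2 * ε * q) ^ i) * pot E p v i s X₀ ≤ β := by
    intro s hs v i hi
    rw [Finset.mem_Icc] at hi
    have h1 := pot_init E hk hE hp0 v i s X₀ hμ30 (hμTp s hs) (hy v)
    calc _ ≤ (2 : ℝ) ^ (-(2 * ε * q) ^ i) * (2 : ℝ) ^ (5 / 4 * μ ^ i) :=
          mul_le_mul_of_nonneg_left h1 (by positivity)
      _ = (2 : ℝ) ^ (-(2 * ε * q) ^ i + 5 / 4 * μ ^ i) := (Real.rpow_add two_pos _ _).symm
      _ ≤ β := by
          apply Real.rpow_le_rpow_of_exponent_le one_le_two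
          have h2 : (2 * ε * q) ^ i = 2 ^ i * μ ^ i := by rw [← mul_pow, hμ, mul_assoc]
          have h3 : (2 : ℝ) ≤ 2 ^ i := le_self_pow₀ one_le_two (by omega)
          have h4 : μ ≤ μ ^ i := le_self_pow₀ (by linarith) (by omega)
          rw [h2]
          nlinarith
  have hstepm : ∀ s, s + 1 ≤ T → ∑ Z, goodRunDist E k (2 * ε) X₀ s Z - n * k * β ≤
      ∑ Z, goodRunDist E k (2 * ε) X₀ (s + 1) Z := by
    intro s hs
    refine le_trans (sub_le_sub_left ?_ _) (hloss s hs)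
    calc _ ≤ ∑ v : V, ∑ i ∈ Finset.Icc 1 (k - 2), β :=
          Finset.sum_le_sum fun v _ => Finset.sum_le_sum fun i hi => hterm (s + 1) hs v i hi
      _ = n * ((k - 2 : ℕ) * β) := by
          simp [hn]
      _ ≤ n * (k * β) := by
          have : ((k - 2 : ℕ) : ℝ) ≤ k := by exact_mod_cast Nat.sub_le k 2
          gcongr
      _ = n * k * β := by ring
  have hm0 : ∑ Z, goodRunDist E k (2 * ε) X₀ 0 Z = 1 := by
    have hgood : ∀ v, ¬ epsBadAt E k (2 * ε) X₀ v := by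
      rintro v ⟨i, hi1, hi2, hb⟩
      refine hX₀ v ⟨i, hi1, hi2, le_trans ?_ hb⟩
      apply pow_le_pow_left₀ hμ0.le
      nlinarith
    rw [Finset.sum_eq_single X₀]
    · exact if_pos ⟨rfl, hgood⟩
    · intro X _ hX
      exact if_neg fun h => hX h.1
    · simp
  have hall : ∀ s, s ≤ T → 1 - s * (n * k * β) ≤ ∑ Z, goodRunDist E k (2 * ε) X₀ s Z := by
    intro s
    induction s with
    | zero => intro _; rw [hm0]; simp
    | succ s ih =>
      intro hs
      have h1 := ih (by omega)
      have h2 := hstepm s hs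
      push_cast
      linarith
  refine le_trans (sub_le_sub_left ?_ 1) (hall T le_rfl)
  -- the union bound over at most `n²` triples `(t, v, i)` is absorbed by the logarithmic
  -- lower bound on `q`
  have hnn : n ^ 2 ≤ (2 : ℝ) ^ (μ / 4) := by
    have h1 : 16 * Real.log n ≤ μ := by
      calc 16 * Real.log n = ε * (50 * (k : ℝ) ^ 2) * (16 * Real.log n) := by rw [hεk, one_mul]
        _ = ε * (800 * (k : ℝ) ^ 2 * Real.log n) := by ring
        _ ≤ μ := mul_le_mul_of_nonneg_left hlog hε0.le
    rw [Real.rpow_def_of_pos two_pos, ← Real.exp_log (pow_pos hn0 2), Real.log_pow]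
    apply Real.exp_le_exp.mpr
    have h2 := Real.log_two_gt_d9
    push_cast
    nlinarith
  have hTk : (T : ℝ) * k ≤ n := by
    refine le_trans ?_ hTle
    apply mul_le_mul_of_nonneg_left _ (Nat.cast_nonneg T)
    nlinarith
  calc (T : ℝ) * (n * k * β) = (T * k) * (n * β) := by ring
    _ ≤ n * (n * β) := mul_le_mul_of_nonneg_right hTk (by positivity)
    _ = n ^ 2 * β := by ring
    _ ≤ (2 : ℝ) ^ (μ / 4) * β := mul_le_mul_of_nonneg_right hnn hβ0.le
    _ = (2 : ℝ) ^ (-μ / 2) := by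
        rw [hβ, ← Real.rpow_add two_pos]
        congr 1
        ring
end
end

section
/- Let k ≥ 3, let H be a simple k-uniform hypergraph on a vertex set V of size n with maximum degree Δ, let ε = 1/(50k²), and suppose q ≥ 500·k³·Δ^{1/(k−1)}. Then for every fixed vertex v ∈ V, the number of colorings X ∈ [q]^V that are ε-bad at v is at most e^{−εq}·q^n; equivalently, if X is chosen uniformly at random from Ω = [q]^V, then Pr(X is ε-bad at v) ≤ e^{−εq}. -/
/-!
Since `H` is simple, the sets `e \ {v}`, for the edges `e ∋ v`, are pairwise disjoint. For a uniformly
random coloring the events that `X` takes exactly `i` values on `e \ {v}` are therefore independent,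
and each has probability at most `p = q^i i^(k-1) / q^(k-1)`: there are at most `q^i` palettes of
size `i`, and a given palette contains the colors of all `k - 1` vertices with probability
`(i/q)^(k-1)`. A Chernoff bound with base `exp 2` gives
`Pr(y_i ≥ μ_i) ≤ exp (8 Δ p - 2 μ_i)`. The hypothesis on `q` makes `8 Δ p ≤ μ_i / 2`, so the
probability is at most `exp (-3/2 ε q)`, and a union bound over the fewer than
`k ≤ exp (ε q / 2)` values of `i` finishes the proof.

All probabilities are written as counts of colorings. `sum_mul_of_indep` is the independence of
functions of disjoint sets of coordinates, `sum_prod_le` its iteration over a disjoint family,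
`card_image_eq_le` the bound on `p`, and `card_bad_index_le` the tail bound for one index `i`.
-/

open Finset

noncomputable section
open Classical

variable {V : Type} [Fintype V] [DecidableEq V]

/-- Functions of disjoint sets of coordinates are independent under the uniform measure on
colorings. The proof exchanges the coordinates outside `A` between two independent copies. -/
theorem sum_mul_of_indep {V : Type} [Fintype V] [DecidableEq V] {q : ℕ} (A : Finset V)
    (h G : (V → Fin q) → ℝ)
    (hh : ∀ X Y : V → Fin q, (∀ u ∈ A, X u = Y u) → h X = h Y)
    (hG : ∀ X Y : V → Fin q, (∀ u, u ∉ A → X u = Y u) → G X = G Y) :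
    (∑ X, h X * G X) * (q : ℝ) ^ (Fintype.card V) = (∑ X, h X) * ∑ X, G X := by
  let mix : (V → Fin q) × (V → Fin q) → (V → Fin q) × (V → Fin q) := fun P =>
    (fun u => if u ∈ A then P.1 u else P.2 u, fun u => if u ∈ A then P.2 u else P.1 u)
  have hmix : Function.Involutive mix := by
    intro P
    ext u <;> by_cases hu : u ∈ A <;> simp [mix, hu]
  have h1 : ∑ P : (V → Fin q) × (V → Fin q), h P.1 * G P.1
      = ∑ P : (V → Fin q) × (V → Fin q), h P.1 * G P.2 := by
    rw [← Equiv.sum_comp hmix.toPerm (fun P => h P.1 * G P.1)]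
    refine Finset.sum_congr rfl fun P _ => ?_
    congr 1
    · apply hh
      intro u hu
      simp [mix, hu]
    · apply hG
      intro u hu
      simp [mix, hu]
  rw [Fintype.sum_prod_type, Fintype.sum_prod_type] at h1
  simp only [Finset.sum_const, Finset.card_univ, Fintype.card_fun, Fintype.card_fin,
    nsmul_eq_mul] at h1
  rw [Finset.sum_mul_sum, ← h1, Finset.sum_mul]
  refine Finset.sum_congr rfl fun X _ => ?_
  push_cast
  ring

/-- The expectation of a product of nonnegative functions of pairwise disjoint sets of coordinates
is at most the product of upper bounds for the individual expectations. -/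
theorem sum_prod_le_s4 {V : Type} [Fintype V] [DecidableEq V] {q : ℕ} (hq : 0 < q)
    (A : Finset V → Finset V) (g : Finset V → (V → Fin q) → ℝ) (B : ℝ)
    (F : Finset (Finset V))
    (hdisj : ∀ e ∈ F, ∀ f ∈ F, e ≠ f → Disjoint (A e) (A f))
    (hloc : ∀ e ∈ F, ∀ X Y : V → Fin q, (∀ u ∈ A e, X u = Y u) → g e X = g e Y)
    (hnn : ∀ e ∈ F, ∀ X, 0 ≤ g e X)
    (hB : ∀ e ∈ F, ∑ X, g e X ≤ (q : ℝ) ^ (Fintype.card V) * B) :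
    ∑ X, ∏ e ∈ F, g e X ≤ (q : ℝ) ^ (Fintype.card V) * B ^ F.card := by
  have hN : (0 : ℝ) < (q : ℝ) ^ (Fintype.card V) := by positivity
  induction F using Finset.induction_on with
  | empty => simp
  | insert a F ha ih =>
    have ih' := ih (fun e he f hf => hdisj e (mem_insert_of_mem he) f (mem_insert_of_mem hf))
      (fun e he => hloc e (mem_insert_of_mem he)) (fun e he => hnn e (mem_insert_of_mem he))
      (fun e he => hB e (mem_insert_of_mem he))
    simp only [Finset.prod_insert ha, Finset.card_insert_of_notMem ha]
    have key := sum_mul_of_indep (A a) (g a) (fun X => ∏ e ∈ F, g e X)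
      (hloc a (mem_insert_self a F)) (by
        intro X Y hXY
        refine Finset.prod_congr rfl fun e he => ?_
        refine hloc e (mem_insert_of_mem he) X Y fun u hu => hXY u fun hua => ?_
        have hd := hdisj e (mem_insert_of_mem he) a (mem_insert_self a F)
          (fun h => ha (h ▸ he))
        exact Finset.disjoint_left.mp hd hu hua)
    have h2 : (0 : ℝ) ≤ ∑ X, ∏ e ∈ F, g e X :=
      Finset.sum_nonneg fun X _ => Finset.prod_nonneg fun e he => hnn e (mem_insert_of_mem he) X
    have h4 := hB a (mem_insert_self a F)
    have h3 : (0 : ℝ) ≤ ∑ X, g a X :=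
      Finset.sum_nonneg fun X _ => hnn a (mem_insert_self a F) X
    refine le_of_mul_le_mul_right ?_ hN
    rw [key]
    calc (∑ X, g a X) * ∑ X, ∏ e ∈ F, g e X
        ≤ ((q : ℝ) ^ (Fintype.card V) * B) * ((q : ℝ) ^ (Fintype.card V) * B ^ F.card) :=
          mul_le_mul h4 ih' h2 (h3.trans h4)
      _ = _ := by ring

/-- The number of colorings taking exactly `i` values on `A`, by a union bound over the palettes
of size `i`. -/
theorem card_image_eq_le {V : Type} [Fintype V] [DecidableEq V] {q : ℕ} (A : Finset V) (i : ℕ) :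
    (univ.filter (fun X : V → Fin q => (A.image X).card = i)).card * q ^ A.card
      ≤ q ^ i * i ^ A.card * q ^ (Fintype.card V) := by
  have hsub : univ.filter (fun X : V → Fin q => (A.image X).card = i) ⊆
      (powersetCard i (univ : Finset (Fin q))).biUnion
        (fun S => Fintype.piFinset (fun u => if u ∈ A then S else univ)) := by
    intro X hX
    simp only [mem_filter, mem_univ, true_and] at hX
    simp only [mem_biUnion, mem_powersetCard, Fintype.mem_piFinset]
    refine ⟨A.image X, ⟨subset_univ _, hX⟩, fun u => ?_⟩
    by_cases hu : u ∈ A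
    · simpa [hu] using ⟨u, hu, rfl⟩
    · simp [hu]
  have hcard : ∀ S ∈ powersetCard i (univ : Finset (Fin q)),
      (Fintype.piFinset (fun u : V => if u ∈ A then S else univ)).card
        ≤ i ^ A.card * q ^ (Aᶜ : Finset V).card := by
    intro S hS
    rw [mem_powersetCard] at hS
    rw [Fintype.card_piFinset, ← Finset.prod_mul_prod_compl A]
    refine le_of_eq ?_
    congr 1
    · rw [Finset.prod_congr rfl (g := fun _ => i), Finset.prod_const]
      intro u hu
      simp [hu, hS.2]
    · rw [Finset.prod_congr rfl (g := fun _ => q), Finset.prod_const]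
      intro u hu
      simp [Finset.mem_compl.mp hu]
  have h1 := (Finset.card_le_card hsub).trans (Finset.card_biUnion_le_card_mul _ _ _ hcard)
  rw [card_powersetCard, card_univ, Fintype.card_fin] at h1
  have h2 : q.choose i ≤ q ^ i := Nat.choose_le_pow q i
  calc _ ≤ (q ^ i * (i ^ A.card * q ^ (Aᶜ : Finset V).card)) * q ^ A.card :=
        Nat.mul_le_mul_right _ (h1.trans (Nat.mul_le_mul_right _ h2))
    _ = q ^ i * i ^ A.card * q ^ (A.card + (Aᶜ : Finset V).card) := by ring
    _ = _ := by rw [Finset.card_add_card_compl]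

/-- Bound for the moment generating function of `yCount` at `2`. Each of the at most `Δ` independent
edges at `v` contributes a factor at most `1 + (exp 2 - 1) p ≤ exp (8 p)`, with
`p = q^i i^(k-1) / q^(k-1)`. -/
theorem sum_exp_yCount_le {V : Type} [Fintype V] [DecidableEq V]
    (k Δ q : ℕ) (hq : 0 < q) (E : Finset (Finset V))
    (hunif : ∀ e ∈ E, e.card = k)
    (hsimple : ∀ e ∈ E, ∀ f ∈ E, e ≠ f → (e ∩ f).card ≤ 1)
    (hdeg : ∀ u : V, (E.filter (fun e => u ∈ e)).card ≤ Δ) (v : V) (i : ℕ) :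
    ∑ X : V → Fin q, Real.exp 2 ^ (yCount E X v i) ≤
      (q : ℝ) ^ (Fintype.card V) *
        Real.exp (8 * (Δ * ((q : ℝ) ^ i * (i : ℝ) ^ (k - 1) / (q : ℝ) ^ (k - 1)))) := by
  set p : ℝ := (q : ℝ) ^ i * (i : ℝ) ^ (k - 1) / (q : ℝ) ^ (k - 1) with hp
  have hp0 : 0 ≤ p := by positivity
  have hq' : (0 : ℝ) < q := by exact_mod_cast hq
  have he1 : (1 : ℝ) ≤ Real.exp 2 := Real.one_le_exp (by norm_num)
  have he2 : Real.exp 2 - 1 ≤ 8 := by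
    have h := Real.exp_one_lt_d9
    have h0 := Real.exp_pos 1
    have : Real.exp 2 = Real.exp 1 * Real.exp 1 := by rw [← Real.exp_add]; norm_num
    rw [this]; nlinarith
  set F := E.filter (fun e => v ∈ e) with hF
  have hprod : ∀ X : V → Fin q, Real.exp 2 ^ (yCount E X v i) =
      ∏ e ∈ F, (if ((e.erase v).image X).card = i then Real.exp 2 else 1) := by
    intro X
    rw [Finset.prod_ite, Finset.prod_const, Finset.prod_const_one, mul_one, hF,
      Finset.filter_filter]
    rfl
  simp only [hprod]
  have hmain := sum_prod_le_s4 hq (fun e => e.erase v)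
    (fun e X => if ((e.erase v).image X).card = i then Real.exp 2 else 1) (1 + 8 * p) F
    (by
      intro e he f hf hne
      rw [hF, mem_filter] at he hf
      rw [Finset.disjoint_left]
      intro u hu hu'
      rw [mem_erase] at hu hu'
      have h1 := Finset.card_le_one.mp (hsimple e he.1 f hf.1 hne) u
        (mem_inter.mpr ⟨hu.2, hu'.2⟩) v (mem_inter.mpr ⟨he.2, hf.2⟩)
      exact hu.1 h1)
    (by
      intro e _ X Y hXY
      have : (e.erase v).image X = (e.erase v).image Y := Finset.image_congr hXY
      simp only [this])
    (by
      intro e _ X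
      split_ifs <;> positivity)
    (by
      intro e he
      rw [hF, mem_filter] at he
      have hc : (e.erase v).card = k - 1 := by rw [card_erase_of_mem he.2, hunif e he.1]
      have h1 := card_image_eq_le (q := q) (e.erase v) i
      rw [hc] at h1
      set b := (univ.filter (fun X : V → Fin q => ((e.erase v).image X).card = i)).card with hb
      have h2 : (b : ℝ) ≤ (q : ℝ) ^ (Fintype.card V) * p := by
        have h1' : (b : ℝ) * (q : ℝ) ^ (k - 1) ≤
            (q : ℝ) ^ i * (i : ℝ) ^ (k - 1) * (q : ℝ) ^ (Fintype.card V) := by exact_mod_cast h1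
        rw [hp, mul_div_assoc', le_div_iff₀ (by positivity)]
        linarith
      have h3 : ∑ X : V → Fin q,
          (if ((e.erase v).image X).card = i then Real.exp 2 else (1 : ℝ))
          = (q : ℝ) ^ (Fintype.card V) + b * (Real.exp 2 - 1) := by
        have : ∀ X : V → Fin q,
            (if ((e.erase v).image X).card = i then Real.exp 2 else (1 : ℝ)) =
            1 + (if ((e.erase v).image X).card = i then Real.exp 2 - 1 else 0) := by
          intro X; split_ifs <;> ring
        simp only [this]
        rw [Finset.sum_add_distrib, ← Finset.sum_filter, Finset.sum_const, Finset.sum_const]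
        simp [hb]
      rw [h3]
      have h4 : (b : ℝ) * (Real.exp 2 - 1) ≤ b * 8 :=
        mul_le_mul_of_nonneg_left he2 (by positivity)
      nlinarith)
  refine hmain.trans (mul_le_mul_of_nonneg_left ?_ (by positivity))
  calc (1 + 8 * p) ^ F.card ≤ (1 + 8 * p) ^ Δ :=
        pow_le_pow_right₀ (by linarith) (hdeg v)
    _ ≤ Real.exp (8 * p) ^ Δ := by
        refine pow_le_pow_left₀ (by positivity) ?_ _
        linarith [Real.add_one_le_exp (8 * p)]
    _ = Real.exp (8 * (Δ * p)) := by rw [← Real.exp_nat_mul]; ring_nf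

/-- Under the lower bound on `q`, the mean of `y_{v,i,X}` is far below the threshold `μ_i`. Here
`s` stands for `Δ^(1/(k-1))`. -/
theorem mean_le_threshold {k i : ℕ} (hik : i + 2 ≤ k) (hi : 1 ≤ i) {q s : ℝ} (hs : 1 ≤ s)
    (hq : 500 * (k : ℝ) ^ 3 * s ≤ q) :
    8 * (s ^ (k - 1) * (q ^ i * (i : ℝ) ^ (k - 1) / q ^ (k - 1))) ≤
      (1 / (50 * (k : ℝ) ^ 2) * q) ^ i / 2 := by
  have hk0 : (1 : ℝ) ≤ k := by exact_mod_cast (by omega : 1 ≤ k)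
  have hq0 : 0 < q := lt_of_lt_of_le (by positivity) hq
  have hik' : (i : ℝ) ≤ k := by exact_mod_cast (by omega : i ≤ k)
  have hr : s * i / q ≤ 1 / (500 * (k : ℝ) ^ 2) := by
    rw [div_le_div_iff₀ hq0 (by positivity)]
    calc s * i * (500 * (k : ℝ) ^ 2) ≤ s * k * (500 * (k : ℝ) ^ 2) := by gcongr
      _ = 500 * (k : ℝ) ^ 3 * s := by ring
      _ ≤ 1 * q := by linarith
  have hk2 : (1 : ℝ) ≤ (k : ℝ) ^ 2 := one_le_pow₀ hk0
  have hpow : (s * i / q) ^ (k - 1) ≤ (1 / (500 * (k : ℝ) ^ 2)) ^ (i + 1) := by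
    refine (pow_le_pow_left₀ (by positivity) hr _).trans ?_
    refine pow_le_pow_of_le_one (by positivity) ?_ (by omega)
    rw [div_le_one (by positivity)]
    linarith
  have hfin : 16 * (1 / (500 * (k : ℝ) ^ 2)) ^ (i + 1) ≤ (1 / (50 * (k : ℝ) ^ 2)) ^ i := by
    rw [pow_succ]
    have h1 : (1 / (500 * (k : ℝ) ^ 2)) ^ i ≤ (1 / (50 * (k : ℝ) ^ 2)) ^ i := by
      gcongr
      norm_num
    have h2 : 16 * (1 / (500 * (k : ℝ) ^ 2)) ≤ 1 := by
      rw [mul_one_div, div_le_one (by positivity)]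
      linarith
    have h3 : (0 : ℝ) ≤ (1 / (500 * (k : ℝ) ^ 2)) ^ i := by positivity
    nlinarith
  have heq : s ^ (k - 1) * (q ^ i * (i : ℝ) ^ (k - 1) / q ^ (k - 1))
      = (s * i / q) ^ (k - 1) * q ^ i := by
    rw [div_pow, mul_pow]; ring
  rw [heq, mul_pow]
  have hqi : 0 < q ^ i := by positivity
  nlinarith [mul_le_mul_of_nonneg_right (hpow) hqi.le, mul_le_mul_of_nonneg_right hfin hqi.le]

/-- Chernoff bound for one index `i`: Markov's inequality for `exp (2 y_{v,i,X})`, whose threshold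
value absorbs the moment generating function. -/
theorem card_bad_index_le {V : Type} [Fintype V] [DecidableEq V]
    (k Δ q : ℕ) (E : Finset (Finset V))
    (hunif : ∀ e ∈ E, e.card = k)
    (hsimple : ∀ e ∈ E, ∀ f ∈ E, e ≠ f → (e ∩ f).card ≤ 1)
    (hdeg : ∀ u : V, (E.filter (fun e => u ∈ e)).card ≤ Δ) (v : V) (i : ℕ)
    (hik : i + 2 ≤ k) (hi : 1 ≤ i) (s : ℝ) (hs : 1 ≤ s) (hsΔ : s ^ (k - 1) = Δ)
    (hq : 500 * (k : ℝ) ^ 3 * s ≤ q) :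
    ((univ.filter (fun X : V → Fin q =>
        (1 / (50 * (k : ℝ) ^ 2) * (q : ℝ)) ^ i ≤ (yCount E X v i : ℝ))).card : ℝ) ≤
      (q : ℝ) ^ (Fintype.card V) *
        Real.exp (-(3 / 2 * (1 / (50 * (k : ℝ) ^ 2) * (q : ℝ)) ^ i)) := by
  have hk0 : (1 : ℝ) ≤ k := by exact_mod_cast (by omega : 1 ≤ k)
  have hq0 : (0 : ℝ) < q := lt_of_lt_of_le (by positivity) hq
  have h1 := sum_exp_yCount_le k Δ q (by exact_mod_cast hq0) E hunif hsimple hdeg v i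
  have h2 := mean_le_threshold hik hi hs hq
  rw [hsΔ] at h2
  set μ : ℝ := (1 / (50 * (k : ℝ) ^ 2) * (q : ℝ)) ^ i with hμ
  set Bad := univ.filter (fun X : V → Fin q => μ ≤ (yCount E X v i : ℝ)) with hBad
  have h3 : (Bad.card : ℝ) * Real.exp (2 * μ) ≤
      ∑ X : V → Fin q, Real.exp 2 ^ (yCount E X v i) := by
    rw [← nsmul_eq_mul]
    refine (Finset.card_nsmul_le_sum Bad (fun X => Real.exp 2 ^ (yCount E X v i)) _ ?_).trans
      (Finset.sum_le_sum_of_subset_of_nonneg (subset_univ _) fun X _ _ => by positivity)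
    intro X hX
    rw [hBad, mem_filter] at hX
    rw [← Real.exp_nat_mul]
    exact Real.exp_le_exp.mpr (by linarith [hX.2])
  have h4 : (Bad.card : ℝ) * Real.exp (2 * μ) ≤
      (q : ℝ) ^ (Fintype.card V) * Real.exp (μ / 2) :=
    (h3.trans h1).trans (mul_le_mul_of_nonneg_left (Real.exp_le_exp.mpr h2) (by positivity))
  refine le_of_mul_le_mul_right ?_ (Real.exp_pos (2 * μ))
  rw [mul_assoc, ← Real.exp_add, show -(3 / 2 * μ) + 2 * μ = μ / 2 by ring]
  exact h4

/-- **Inequality (upper).** If `q ≥ 500 k³ Δ^{1/(k-1)}` then for every fixed vertex `v`, the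
number of colorings `X ∈ [q]^V` that are `ε`-bad at `v` (with `ε = 1/(50k²)`) is at most
`e^{-εq} q^n`; i.e. a uniformly random coloring is `ε`-bad at `v` with probability `≤ e^{-εq}`. -/
theorem bad_at_vertex_count {V : Type} [Fintype V] [DecidableEq V]
    (k Δ q : ℕ) (hk : 3 ≤ k) (E : Finset (Finset V))
    (hunif : ∀ e ∈ E, e.card = k)
    (hsimple : ∀ e ∈ E, ∀ f ∈ E, e ≠ f → (e ∩ f).card ≤ 1)
    (hdeg : ∀ u : V, (E.filter (fun e => u ∈ e)).card ≤ Δ)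
    (hq : 500 * (k : ℝ) ^ 3 * (Δ : ℝ) ^ ((1 : ℝ) / ((k : ℝ) - 1)) ≤ (q : ℝ))
    (v : V) :
    ((Finset.univ.filter
        (fun X : V → Fin q => epsBadAt E k (1 / (50 * (k : ℝ) ^ 2)) X v)).card : ℝ) ≤
      Real.exp (-((1 / (50 * (k : ℝ) ^ 2)) * (q : ℝ))) * (q : ℝ) ^ (Fintype.card V) := by
  have hk3 : (3 : ℝ) ≤ k := by exact_mod_cast hk
  rcases Nat.eq_zero_or_pos Δ with hΔ | hΔ
  · -- No edge contains `v`, so all counts are `0`, whereas the thresholds are positive: a bad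
    -- coloring would need `q > 0`, the color of `v` being an element of `Fin q`.
    subst hΔ
    have hempty : univ.filter
        (fun X : V → Fin q => epsBadAt E k (1 / (50 * (k : ℝ) ^ 2)) X v) = ∅ := by
      refine Finset.filter_eq_empty_iff.mpr fun X _ => ?_
      rintro ⟨i, -, -, hbad⟩
      have hqpos : (0 : ℝ) < q := by exact_mod_cast (X v).pos
      have h0 : yCount E X v i = 0 := by
        refine Nat.le_zero.mp (le_trans (Finset.card_le_card ?_) (hdeg v))
        intro e he
        rw [mem_filter] at he ⊢
        exact ⟨he.1, he.2.1⟩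
      rw [h0, Nat.cast_zero] at hbad
      exact absurd hbad (not_le.mpr (by positivity))
    rw [hempty, Finset.card_empty, Nat.cast_zero]
    positivity
  set s : ℝ := (Δ : ℝ) ^ ((1 : ℝ) / ((k : ℝ) - 1)) with hs_def
  have hs : 1 ≤ s := Real.one_le_rpow (by exact_mod_cast hΔ)
    (div_nonneg zero_le_one (by linarith))
  have hsΔ : s ^ (k - 1) = Δ := by
    have hcast : (k : ℝ) - 1 = ((k - 1 : ℕ) : ℝ) := by
      rw [Nat.cast_sub (by omega), Nat.cast_one]
    rw [hs_def, hcast, one_div]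
    exact Real.rpow_inv_natCast_pow (by positivity) (by omega)
  set a : ℝ := 1 / (50 * (k : ℝ) ^ 2) * (q : ℝ) with ha
  have hak : 10 * (k : ℝ) ≤ a := by
    rw [ha, one_div_mul_eq_div, le_div_iff₀ (by positivity)]
    have : 500 * (k : ℝ) ^ 3 * 1 ≤ 500 * (k : ℝ) ^ 3 * s := by gcongr
    linarith
  have hsub : univ.filter
      (fun X : V → Fin q => epsBadAt E k (1 / (50 * (k : ℝ) ^ 2)) X v) ⊆
      (Finset.Icc 1 (k - 2)).biUnion (fun i => univ.filter (fun X : V → Fin q =>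
        a ^ i ≤ (yCount E X v i : ℝ))) := by
    intro X hX
    obtain ⟨i, h1, h2, h3⟩ := (mem_filter.mp hX).2
    exact mem_biUnion.mpr ⟨i, Finset.mem_Icc.mpr ⟨h1, h2⟩, mem_filter.mpr ⟨mem_univ _, h3⟩⟩
  have hone : ∀ i ∈ Finset.Icc 1 (k - 2),
      ((univ.filter (fun X : V → Fin q => a ^ i ≤ (yCount E X v i : ℝ))).card : ℝ) ≤
        (q : ℝ) ^ (Fintype.card V) * Real.exp (-(3 / 2 * a)) := by
    intro i hi
    rw [Finset.mem_Icc] at hi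
    refine (card_bad_index_le k Δ q E hunif hsimple hdeg v i (by omega) hi.1 s hs hsΔ hq).trans ?_
    refine mul_le_mul_of_nonneg_left (Real.exp_le_exp.mpr ?_) (by positivity)
    have : a ≤ a ^ i := le_self_pow₀ (by linarith) (by omega)
    linarith
  have hk_exp : ((k - 2 : ℕ) : ℝ) ≤ Real.exp (a / 2) := by
    have h1 : ((k - 2 : ℕ) : ℝ) ≤ k := by exact_mod_cast Nat.sub_le k 2
    linarith [Real.add_one_le_exp (a / 2)]
  calc _ ≤ (((Finset.Icc 1 (k - 2)).biUnion (fun i => univ.filter (fun X : V → Fin q =>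
        a ^ i ≤ (yCount E X v i : ℝ)))).card : ℝ) := by exact_mod_cast Finset.card_le_card hsub
    _ ≤ ∑ i ∈ Finset.Icc 1 (k - 2),
        ((univ.filter (fun X : V → Fin q => a ^ i ≤ (yCount E X v i : ℝ))).card : ℝ) := by
        exact_mod_cast Finset.card_biUnion_le
    _ ≤ ((k - 2 : ℕ) : ℝ) * ((q : ℝ) ^ (Fintype.card V) * Real.exp (-(3 / 2 * a))) := by
        refine (Finset.sum_le_sum hone).trans (le_of_eq ?_)
        rw [Finset.sum_const, Nat.card_Icc, nsmul_eq_mul]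
        simp
    _ ≤ Real.exp (a / 2) * ((q : ℝ) ^ (Fintype.card V) * Real.exp (-(3 / 2 * a))) :=
        mul_le_mul_of_nonneg_right hk_exp (by positivity)
    _ = Real.exp (a / 2 + -(3 / 2 * a)) * (q : ℝ) ^ (Fintype.card V) := by
        rw [Real.exp_add]; ring
    _ = Real.exp (-a) * (q : ℝ) ^ (Fintype.card V) := by
        congr 2; ring
end
end

section
/- Let k ≥ 3, let H be a simple k-uniform hypergraph on a vertex set V of size n with maximum degree Δ, let v ∈ V, let 1 ≤ i ≤ k−2, and let m be a positive integer. If X is chosen uniformly at random from [q]^V, then Pr(y_{v,i,X} ≥ m) ≤ (e·C(k−1,i)·(i/q)^{k−1−i}·Δ/m)^m, where C(k−1,i) is the binomial coefficient. -/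
/-!
The bound is a union bound over partial certificates for `m ≤ y_{v,i,X}`.

If `m ≤ y_{v,i,X}`, there is a set `T` of `m` edges through `v` such that `X` takes exactly `i`
values on `e \ {v}` for each `e ∈ T`. In each such `e \ {v}` choose a set `R e` of `i` vertices
representing these values; then every vertex `w` of `e \ {v}` outside `R e` has a color in
`X(R e)`, a set of at most `i` colors.

Fix `T` and `R`. Since `H` is simple, the sets `e \ {v}` are pairwise disjoint, so the
`m (k - 1 - i)` non-representatives are distinct, and no representative of one edge is a
non-representative of another. Once the colors of all other vertices are fixed, each
non-representative has at most `i` admissible colors, so a uniform coloring is compatible with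
`(T, R)` with probability at most `(i / q) ^ (m (k - 1 - i))`; this is `card_confined_le`.
There are at most `C(Δ, m)` choices of `T` and `C(k - 1, i) ^ m` choices of `R`, and
`C(Δ, m) ≤ Δ ^ m / m! ≤ (e Δ / m) ^ m`.
-/

open Finset

noncomputable section
open Classical

variable {V : Type} [Fintype V] [DecidableEq V]

/-- Reveal the colors off `W` first: as `Q w` is disjoint from `W`, the color set `X(Q w)` is then
determined, which leaves at most `i` choices for the color of each `w ∈ W`. -/
lemma card_confined_le {V : Type} [Fintype V] [DecidableEq V] {q : ℕ} (i : ℕ)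
    (W : Finset V) (Q : V → Finset V) (hQW : ∀ w ∈ W, Disjoint (Q w) W)
    (hQ : ∀ w ∈ W, (Q w).card ≤ i) :
    (Finset.univ.filter (fun X : V → Fin q => ∀ w ∈ W, X w ∈ (Q w).image X)).card ≤
      i ^ W.card * q ^ (Fintype.card V - W.card) := by
  set s := Finset.univ.filter (fun X : V → Fin q => ∀ w ∈ W, X w ∈ (Q w).image X) with hs
  let r : (V → Fin q) → ({w // w ∉ W} → Fin q) := fun X w => X w
  have hfib : ∀ Y ∈ s.image r, (s.filter (fun X => r X = Y)).card ≤ i ^ W.card := by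
    intro Y hY
    obtain ⟨X₀, -, rfl⟩ := Finset.mem_image.1 hY
    have hsub : s.filter (fun X => r X = r X₀) ⊆
        Fintype.piFinset (fun w => if w ∈ W then (Q w).image X₀ else {X₀ w}) := by
      intro X hX
      obtain ⟨hXs, hr⟩ := Finset.mem_filter.1 hX
      have heq : ∀ u, u ∉ W → X u = X₀ u := fun u hu => congrFun hr ⟨u, hu⟩
      rw [Fintype.mem_piFinset]
      intro w
      split_ifs with hw
      · have h := (Finset.mem_filter.1 hXs).2 w hw
        rwa [Finset.image_congr (g := X₀)] at h
        intro u hu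
        exact heq u (Finset.disjoint_left.1 (hQW w hw) hu)
      · simpa using heq w hw
    refine (Finset.card_le_card hsub).trans ?_
    rw [Fintype.card_piFinset]
    calc _ ≤ ∏ w : V, (if w ∈ W then i else 1) := by
          refine Finset.prod_le_prod' fun w _ => ?_
          split_ifs with hw
          · exact Finset.card_image_le.trans (hQ w hw)
          · simp
      _ = i ^ W.card := by simp
  refine (Finset.card_le_mul_card_image s _ hfib).trans (Nat.mul_le_mul_left _ ?_)
  refine (Finset.card_le_univ _).trans (le_of_eq ?_)
  simp [Fintype.card_subtype_compl]

/-- The union bound over the representatives `R e`, for a fixed family `T` of edges; `g e` plays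
the role of `e \ {v}`. -/
lemma card_family_le {V : Type} [Fintype V] [DecidableEq V] {q : ℕ} (i j : ℕ)
    (T : Finset (Finset V)) (g : Finset V → Finset V) (hg : ∀ e ∈ T, (g e).card = j)
    (hdisj : ∀ e ∈ T, ∀ f ∈ T, e ≠ f → Disjoint (g e) (g f)) :
    (Finset.univ.filter (fun X : V → Fin q => ∀ e ∈ T, ((g e).image X).card = i)).card ≤
      (j.choose i) ^ T.card *
        (i ^ (T.card * (j - i)) * q ^ (Fintype.card V - T.card * (j - i))) := by
  -- Encode the choice of representatives as a total function, trivial off `T`.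
  let P : Finset (Finset V → Finset V) :=
    Fintype.piFinset (fun e => if e ∈ T then Finset.powersetCard i (g e) else {∅})
  let W : (Finset V → Finset V) → Finset V := fun R => T.biUnion (fun e => g e \ R e)
  have hPmem : ∀ R ∈ P, ∀ e ∈ T, R e ⊆ g e ∧ (R e).card = i := by
    intro R hR e he
    have h := Fintype.mem_piFinset.1 hR e
    rw [if_pos he] at h
    exact Finset.mem_powersetCard.1 h
  have hPcard : P.card = (j.choose i) ^ T.card := by
    rw [Fintype.card_piFinset]
    calc _ = ∏ e : Finset V, (if e ∈ T then j.choose i else 1) := by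
          refine Finset.prod_congr rfl fun e _ => ?_
          split_ifs with he
          · rw [Finset.card_powersetCard, hg e he]
          · simp
      _ = _ := by simp
  have hWcard : ∀ R ∈ P, (W R).card = T.card * (j - i) := by
    intro R hR
    rw [Finset.card_biUnion]
    · rw [Finset.sum_const_nat]
      intro e he
      rw [Finset.card_sdiff_of_subset (hPmem R hR e he).1, hg e he, (hPmem R hR e he).2]
    · intro e he f hf hne
      exact (hdisj e he f hf hne).mono Finset.sdiff_subset Finset.sdiff_subset
  have hQex : ∀ R : Finset V → Finset V, ∀ w, ∃ e, w ∈ W R → e ∈ T ∧ w ∈ g e \ R e := by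
    intro R w
    by_cases hw : w ∈ W R
    · obtain ⟨e, he, hwe⟩ := Finset.mem_biUnion.1 hw
      exact ⟨e, fun _ => ⟨he, hwe⟩⟩
    · exact ⟨∅, fun h => absurd h hw⟩
  choose c hc using hQex
  have hsub : Finset.univ.filter (fun X : V → Fin q => ∀ e ∈ T, ((g e).image X).card = i) ⊆
      P.biUnion (fun R => Finset.univ.filter
        (fun X : V → Fin q => ∀ w ∈ W R, X w ∈ (R (c R w)).image X)) := by
    intro X hX
    have hX' := (Finset.mem_filter.1 hX).2
    have hrep : ∀ e, ∃ R : Finset V, (e ∈ T → R ⊆ g e ∧ R.card = i ∧ R.image X = (g e).image X) ∧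
        (e ∉ T → R = ∅) := by
      intro e
      by_cases he : e ∈ T
      · obtain ⟨R, hR1, hR2, hR3⟩ := Finset.exists_subset_injOn_image_eq_of_surjOn (f := X)
          (g e : Set V) ((g e).image X) (by simp [Set.SurjOn])
        refine ⟨R, fun _ => ⟨by exact_mod_cast hR1, ?_, hR3⟩, fun h => absurd he h⟩
        rw [← hX' e he, ← hR3, Finset.card_image_of_injOn hR2]
      · exact ⟨∅, fun h => absurd h he, fun _ => rfl⟩
    choose R hR hR0 using hrep
    refine Finset.mem_biUnion.2 ⟨R, ?_, ?_⟩
    · refine Fintype.mem_piFinset.2 fun e => ?_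
      split_ifs with he
      · exact Finset.mem_powersetCard.2 ⟨(hR e he).1, (hR e he).2.1⟩
      · simpa using hR0 e he
    · refine Finset.mem_filter.2 ⟨Finset.mem_univ _, fun w hw => ?_⟩
      obtain ⟨h1, h2⟩ := hc R w hw
      rw [(hR _ h1).2.2]
      exact Finset.mem_image_of_mem X (Finset.mem_sdiff.1 h2).1
  refine (Finset.card_le_card hsub).trans ?_
  rw [← hPcard]
  refine Finset.card_biUnion_le_card_mul _ _ _ fun R hR => ?_
  rw [← hWcard R hR]
  refine card_confined_le i (W R) (fun w => R (c R w)) (fun w hw => ?_) (fun w hw => ?_)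
  · obtain ⟨h1, -⟩ := hc R w hw
    refine Finset.disjoint_left.2 fun u hu huW => ?_
    obtain ⟨f, hf, huf⟩ := Finset.mem_biUnion.1 huW
    rw [Finset.mem_sdiff] at huf
    -- A representative for `c R w` lying in `g f` forces `f = c R w` by disjointness.
    by_cases hne : c R w = f
    · exact huf.2 (hne ▸ hu)
    · exact Finset.disjoint_left.1 (hdisj _ h1 f hf hne) ((hPmem R hR _ h1).1 hu) huf.1
  · exact (hPmem R hR _ (hc R w hw).1).2.le

/-- `C(s, m) ≤ (e Δ / m) ^ m` for `s ≤ Δ`. -/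
lemma choose_le_exp_mul_div_pow (s Δ m : ℕ) (hs : s ≤ Δ) (hm : 0 < m) :
    (s.choose m : ℝ) ≤ (Real.exp 1 * Δ / m) ^ m := by
  have hm' : (0 : ℝ) < m := by exact_mod_cast hm
  have hfac : (0 : ℝ) < m.factorial := by exact_mod_cast m.factorial_pos
  have h2 : (m : ℝ) ^ m / m.factorial ≤ Real.exp 1 ^ m := by
    rw [← Real.exp_nat_mul, mul_one]
    exact Real.pow_div_factorial_le_exp (m : ℝ) hm'.le m
  calc (s.choose m : ℝ) ≤ (s : ℝ) ^ m / m.factorial := Nat.choose_le_pow_div m s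
    _ ≤ (Δ : ℝ) ^ m / m.factorial := by gcongr
    _ = (Δ / m : ℝ) ^ m * ((m : ℝ) ^ m / m.factorial) := by
        rw [div_pow]; field_simp
    _ ≤ (Δ / m : ℝ) ^ m * Real.exp 1 ^ m := by gcongr
    _ = _ := by rw [← mul_pow]; congr 1; ring

/-- **Inequality (upper1).** For a simple `k`-uniform hypergraph with maximum degree `Δ`,
a vertex `v`, `1 ≤ i ≤ k-2` and a positive integer `m`: for a uniformly random
`X ∈ [q]^V`, `Pr(y_{v,i,X} ≥ m) ≤ (e C(k-1,i) (i/q)^{k-1-i} Δ / m)^m`. -/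
theorem yCount_tail_bound {V : Type} [Fintype V] [DecidableEq V]
    (k Δ q : ℕ) (hk : 3 ≤ k) (E : Finset (Finset V))
    (hunif : ∀ e ∈ E, e.card = k)
    (hsimple : ∀ e ∈ E, ∀ f ∈ E, e ≠ f → (e ∩ f).card ≤ 1)
    (hdeg : ∀ u : V, (E.filter (fun e => u ∈ e)).card ≤ Δ)
    (v : V) (i m : ℕ) (hi1 : 1 ≤ i) (hi2 : i ≤ k - 2) (hm : 0 < m) :
    ((Finset.univ.filter (fun X : V → Fin q => m ≤ yCount E X v i)).card : ℝ) /
        (q : ℝ) ^ (Fintype.card V) ≤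
      (Real.exp 1 * (Nat.choose (k - 1) i : ℝ) * ((i : ℝ) / (q : ℝ)) ^ (k - 1 - i) *
          (Δ : ℝ) / (m : ℝ)) ^ m := by
  have hm' : (0 : ℝ) < m := by exact_mod_cast hm
  -- With no colors there are no colorings, as `V` contains `v`.
  rcases Nat.eq_zero_or_pos q with rfl | hq
  · have h0 : Finset.univ.filter (fun X : V → Fin 0 => m ≤ yCount E X v i) = ∅ :=
      Finset.eq_empty_of_forall_notMem fun X _ => (X v).elim0
    rw [h0]
    simp only [Finset.card_empty, Nat.cast_zero, zero_div]
    positivity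
  have hq' : (0 : ℝ) < q := by exact_mod_cast hq
  set S := E.filter (fun e => v ∈ e) with hS
  have hSmem : ∀ e ∈ S, e ∈ E ∧ v ∈ e := fun e he => Finset.mem_filter.1 he
  have hcard : ∀ e ∈ S, (e.erase v).card = k - 1 := fun e he => by
    rw [Finset.card_erase_of_mem (hSmem e he).2, hunif e (hSmem e he).1]
  have hdisj : ∀ e ∈ S, ∀ f ∈ S, e ≠ f → Disjoint (e.erase v) (f.erase v) := by
    intro e he f hf hne
    refine Finset.disjoint_left.2 fun u hu hu' => ?_
    rw [Finset.mem_erase] at hu hu'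
    have h := Finset.card_le_one.1 (hsimple e (hSmem e he).1 f (hSmem f hf).1 hne)
    exact hu.1 (h u (Finset.mem_inter.2 ⟨hu.2, hu'.2⟩) v
      (Finset.mem_inter.2 ⟨(hSmem e he).2, (hSmem f hf).2⟩))
  set d := k - 1 - i with hd
  set C := (k - 1).choose i with hC
  have hsub : Finset.univ.filter (fun X : V → Fin q => m ≤ yCount E X v i) ⊆
      (Finset.powersetCard m S).biUnion (fun T => Finset.univ.filter
        (fun X : V → Fin q => ∀ e ∈ T, ((e.erase v).image X).card = i)) := by
    intro X hX
    obtain ⟨T, hT, hTm⟩ := Finset.exists_subset_card_eq (Finset.mem_filter.1 hX).2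
    have hT' := fun e he => Finset.mem_filter.1 (hT he : e ∈ _)
    exact Finset.mem_biUnion.2 ⟨T, Finset.mem_powersetCard.2
      ⟨fun e he => Finset.mem_filter.2 ⟨(hT' e he).1, (hT' e he).2.1⟩, hTm⟩,
      Finset.mem_filter.2 ⟨Finset.mem_univ _, fun e he => (hT' e he).2.2⟩⟩
  have hcount : (Finset.univ.filter (fun X : V → Fin q => m ≤ yCount E X v i)).card ≤
      S.card.choose m * (C ^ m * (i ^ (m * d) * q ^ (Fintype.card V - m * d))) := by
    refine (Finset.card_le_card hsub).trans ?_
    rw [← Finset.card_powersetCard]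
    refine Finset.card_biUnion_le_card_mul _ _ _ fun T hT => ?_
    obtain ⟨hTS, hTm⟩ := Finset.mem_powersetCard.1 hT
    have h := card_family_le (q := q) i (k - 1) T (fun e => e.erase v)
      (fun e he => hcard e (hTS he)) (fun e he f hf => hdisj e (hTS he) f (hTS hf))
    rwa [hTm] at h
  -- If fewer than `m` edges contain `v`, the truncated exponent `|V| - m d` may be `0`, but then
  -- the binomial coefficient vanishes.
  rcases lt_or_ge S.card m with hlt | hge
  · rw [Nat.choose_eq_zero_of_lt hlt, zero_mul, Nat.le_zero] at hcount
    rw [hcount, Nat.cast_zero, zero_div]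
    positivity
  have hmd : m * d ≤ Fintype.card V := by
    have h1 : (S.biUnion (fun e => e.erase v)).card = S.card * (k - 1) := by
      rw [Finset.card_biUnion hdisj, Finset.sum_const_nat hcard]
    have h2 := Finset.card_le_univ (S.biUnion (fun e => e.erase v))
    rw [h1] at h2
    exact (Nat.mul_le_mul hge (Nat.sub_le _ _)).trans h2
  have hcount' : ((Finset.univ.filter (fun X : V → Fin q => m ≤ yCount E X v i)).card : ℝ) ≤
      S.card.choose m * (C ^ m * (i ^ (m * d) * q ^ (Fintype.card V - m * d))) := by
    exact_mod_cast hcount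
  rw [div_le_iff₀ (by positivity)]
  refine hcount'.trans ?_
  calc _ ≤ (Real.exp 1 * Δ / m) ^ m *
        ((C : ℝ) ^ m * ((i : ℝ) ^ (m * d) * (q : ℝ) ^ (Fintype.card V - m * d))) := by
        gcongr
        exact choose_le_exp_mul_div_pow _ _ _ (hdeg v) hm
    _ = (Real.exp 1 * Δ / m) ^ m *
        ((C : ℝ) ^ m * (((i / q : ℝ) ^ d) ^ m * (q : ℝ) ^ Fintype.card V)) := by
        rw [← Nat.sub_add_cancel hmd, Nat.add_sub_cancel, pow_add, ← pow_mul, mul_comm d m,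
          div_pow (i : ℝ)]
        field_simp
    _ = _ := by rw [← mul_assoc, ← mul_assoc, ← mul_pow, ← mul_pow]; congr 2; ring
end
end

section
/- Let k ≥ 3 and 1 ≤ i ≤ k−2 be integers, let Δ ≥ 1 and q > 0 be reals with q ≥ 500·k³·Δ^{1/(k−1)}, and set ε = 1/(50k²) and μ_i = (εq)^i. Then (e·C(k−1,i)·(i/q)^{k−1−i}·Δ/μ_i)^{μ_i} ≤ 10^{−2εq}, where C(k−1,i) is the binomial coefficient. In particular the base satisfies e·C(k−1,i)·(i/q)^{k−1−i}·Δ/(εq)^i ≤ 10^{−2} and μ_i ≥ εq. -/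
/-! Write `n = k - 1` and `x = ε q`. The hypothesis on `q` says `x ≥ 10 k Δ^{1/n}`, i.e.
`Δ ≤ (x / (10 k))^n`, and in particular `x ≥ 1`. Since `i / q = i ε / x`, all powers of `x` in the
base cancel and the base is at most `e C(n,i) (i ε)^{n-i} / (10 k)^n`. Bounding `C(n,i) ≤ 2^n` and
`(i ε)^{n-i} ≤ i ε ≤ 1 / (50 k)` leaves `e (1 / (5 k))^n / (50 k) ≤ 3 · (1/15)^2 / 150 < 1/100`.
The power estimate then follows from monotonicity in the base and from `x ≤ x^i`. -/

/-- The bound on the base, with `k = n + 1`, `x = ε q` and `q` eliminated through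
`i / q = i ε / x`; here `c` stands for `i ε`. -/
lemma base_le (n i : ℕ) (hn : 2 ≤ n) (hi : i < n) (Δ x c : ℝ) (hx : 0 < x) (hc0 : 0 ≤ c)
    (hc : c ≤ 1 / 150) (hΔ0 : 0 ≤ Δ)
    (hΔ : Δ ≤ (x / (10 * ((n : ℝ) + 1))) ^ n) :
    Real.exp 1 * (Nat.choose n i : ℝ) * (c / x) ^ (n - i) * Δ / x ^ i ≤ 1 / 100 := by
  have hchoose : (Nat.choose n i : ℝ) ≤ 2 ^ n := by
    exact_mod_cast Nat.choose_le_two_pow n i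
  have hexp : Real.exp 1 ≤ 3 := by linarith [Real.exp_one_lt_d9]
  have hcpow : c ^ (n - i) ≤ 1 / 150 :=
    (pow_le_of_le_one hc0 (by linarith) (by omega)).trans hc
  have hn' : (2 : ℝ) ≤ n := by exact_mod_cast hn
  have hgeom : (2 / (10 * ((n : ℝ) + 1))) ^ n ≤ (1 / 15) ^ 2 := by
    have h1 : 2 / (10 * ((n : ℝ) + 1)) ≤ 1 / 15 := by
      rw [div_le_div_iff₀ (by positivity) (by norm_num)]; linarith
    calc (2 / (10 * ((n : ℝ) + 1))) ^ n ≤ (1 / 15) ^ n := by gcongr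
      _ ≤ (1 / 15) ^ 2 := pow_le_pow_of_le_one (by norm_num) (by norm_num) hn
  calc Real.exp 1 * (Nat.choose n i : ℝ) * (c / x) ^ (n - i) * Δ / x ^ i
      ≤ 3 * 2 ^ n * (c / x) ^ (n - i) * (x / (10 * ((n : ℝ) + 1))) ^ n / x ^ i := by gcongr
    _ = 3 * c ^ (n - i) * (2 / (10 * ((n : ℝ) + 1))) ^ n := by
        have hsplit : x ^ n = x ^ (n - i) * x ^ i := by
          rw [← pow_add, Nat.sub_add_cancel hi.le]
        simp only [div_pow]
        rw [hsplit]
        field_simp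
    _ ≤ 3 * (1 / 150) * (1 / 15) ^ 2 := by gcongr
    _ ≤ 1 / 100 := by norm_num


/-- **Numerical inequality.** For integers `k ≥ 3` and `1 ≤ i ≤ k-2`, reals `Δ ≥ 1` and
`q > 0` with `q ≥ 500 k³ Δ^{1/(k-1)}`, setting `ε = 1/(50k²)` and `μ_i = (εq)^i`, we have
`(e C(k-1,i) (i/q)^{k-1-i} Δ / μ_i)^{μ_i} ≤ 10^{-2εq}`; moreover the base is at most `10^{-2}`
and `μ_i ≥ εq`. -/
theorem numerical_bad_bound (k i : ℕ) (hk : 3 ≤ k) (hi1 : 1 ≤ i) (hi2 : i ≤ k - 2)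
    (Δ q : ℝ) (hΔ : 1 ≤ Δ) (hq0 : 0 < q)
    (hq : 500 * (k : ℝ) ^ 3 * Δ ^ ((1 : ℝ) / ((k : ℝ) - 1)) ≤ q) :
    (Real.exp 1 * (Nat.choose (k - 1) i : ℝ) * ((i : ℝ) / q) ^ (k - 1 - i) * Δ /
        ((1 / (50 * (k : ℝ) ^ 2)) * q) ^ i) ^ (((1 / (50 * (k : ℝ) ^ 2)) * q) ^ i : ℝ) ≤
      (10 : ℝ) ^ (-(2 * ((1 / (50 * (k : ℝ) ^ 2)) * q))) ∧
    Real.exp 1 * (Nat.choose (k - 1) i : ℝ) * ((i : ℝ) / q) ^ (k - 1 - i) * Δ /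
        ((1 / (50 * (k : ℝ) ^ 2)) * q) ^ i ≤ (10 : ℝ) ^ (-(2 : ℝ)) ∧
    (1 / (50 * (k : ℝ) ^ 2)) * q ≤ ((1 / (50 * (k : ℝ) ^ 2)) * q) ^ i := by
  obtain ⟨n, rfl⟩ : ∃ n, k = n + 1 := ⟨k - 1, by omega⟩
  have hn : 2 ≤ n := by omega
  have hin : i < n := by omega
  have hn' : (2 : ℝ) ≤ n := by exact_mod_cast hn
  have hin' : (i : ℝ) ≤ n := by exact_mod_cast hin.le
  simp only [Nat.add_sub_cancel]
  push_cast at hq ⊢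
  rw [add_sub_cancel_right] at hq
  set K : ℝ := (n : ℝ) + 1 with hK
  have hKpos : 0 < K := by positivity
  set x : ℝ := 1 / (50 * K ^ 2) * q with hx
  have hΔ0 : 0 ≤ Δ := by linarith
  set r : ℝ := Δ ^ ((1 : ℝ) / (n : ℝ)) with hr
  have hr1 : 1 ≤ r := Real.one_le_rpow hΔ (by positivity)
  have hrn : r ^ n = Δ := by
    rw [hr, one_div]
    exact Real.rpow_inv_natCast_pow (by linarith) (by omega)
  have hrx : r ≤ x / (10 * K) := by
    rw [hx, le_div_iff₀ (by positivity), one_div, inv_mul_eq_div, le_div_iff₀ (by positivity)]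
    linarith
  have hx1 : 1 ≤ x := by
    have h := hr1.trans hrx
    rw [le_div_iff₀ (by positivity)] at h
    linarith
  have hΔx : Δ ≤ (x / (10 * K)) ^ n := by
    rw [← hrn]
    gcongr
  have hiq : (i : ℝ) / q = (i / (50 * K ^ 2)) / x := by
    rw [hx]
    field_simp
  have hc : (i : ℝ) / (50 * K ^ 2) ≤ 1 / 150 := by
    rw [div_le_div_iff₀ (by positivity) (by norm_num)]
    nlinarith
  have hxi : x ≤ x ^ i := le_self_pow₀ hx1 (by omega)
  have hbase := base_le n i hn hin Δ x (i / (50 * K ^ 2)) (by linarith) (by positivity) hc hΔ0 hΔx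
  rw [← hiq] at hbase
  have hten : (10 : ℝ) ^ (-(2 : ℝ)) = 1 / 100 := by
    rw [Real.rpow_neg (by norm_num)]
    norm_num
  refine ⟨?_, hten ▸ hbase, hxi⟩
  have hx0 : 0 < x := by linarith
  calc _ ≤ ((10 : ℝ) ^ (-(2 : ℝ))) ^ (x ^ i) :=
        Real.rpow_le_rpow (by positivity) (hten ▸ hbase) (by positivity)
    _ = (10 : ℝ) ^ (-(2 * x ^ i)) := by
        rw [← Real.rpow_mul (by norm_num), neg_mul]
    _ ≤ (10 : ℝ) ^ (-(2 * x)) :=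
        Real.rpow_le_rpow_of_exponent_le (by norm_num) (by linarith)
end
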